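/- arXiv:2504.21728 — 2 statements merged into one kernel-verified Lean document; each statement's English description precedes it below -/
import Mathlib

section
/- Let alpha, beta > 0 and C >= 1 be constants and let D be an (alpha,beta)-PDF-bounded distribution. There exists a constant K (depending only on alpha, beta, C) such that for all sufficiently large n, every m >= 10^6 (beta/alpha) C n log n / log log n, and every weight vector (w_1,...,w_n) with w_max/w_min <= C, when the mn utilities u_i(g) are drawn independently from D, the probability that the weighted picking sequence algorithm produces a weighted envy-free (WEF) allocation is at least 1 - K/n. -/
open Finset MeasureTheory
open scoped ENNReal

open Finset

/-- `pickCount picker i s` is the number of picks made by agent `i` among the first `s` steps. -/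
def pickCount {n m : ℕ} (picker : Fin m → Fin n) (i : Fin n) (s : ℕ) : ℕ :=
  (Finset.univ.filter fun s' : Fin m => (s' : ℕ) < s ∧ picker s' = i).card

/-- A run of the weighted picking sequence algorithm (for an arbitrary tie-breaking rule):
at step `s`, agent `picker s` picks item `item s`.  The picking agent must minimize
`t_i / w_i` among all agents, and the picked item must maximize her utility among the
items that have not been picked at earlier steps. -/
structure IsWPSRun {n m : ℕ} (w : Fin n → ℝ) (u : Fin n → Fin m → ℝ)
    (picker : Fin m → Fin n) (item : Fin m → Fin m) : Prop where
  item_inj : Function.Injective item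
  min_ratio : ∀ s : Fin m, ∀ j : Fin n,
    (pickCount picker (picker s) (s : ℕ) : ℝ) / w (picker s)
      ≤ (pickCount picker j (s : ℕ) : ℝ) / w j
  best_item : ∀ s g : Fin m, (∀ s' : Fin m, (s' : ℕ) < (s : ℕ) → item s' ≠ g) →
    u (picker s) g ≤ u (picker s) (item s)

/-- An allocation is a partition of the items into `n` bundles: every item belongs to
exactly one bundle. -/
def IsAllocation {n m : ℕ} (A : Fin n → Finset (Fin m)) : Prop :=
  ∀ g : Fin m, ∃! i : Fin n, g ∈ A i

/-- An allocation `A` is weighted envy-free (WEF) if `u_i(A_i)/w_i ≥ u_i(A_j)/w_j` for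
all agents `i, j`. -/
def IsWEF {n m : ℕ} (w : Fin n → ℝ) (u : Fin n → Fin m → ℝ)
    (A : Fin n → Finset (Fin m)) : Prop :=
  ∀ i j : Fin n, (∑ g ∈ A j, u i g) / w j ≤ (∑ g ∈ A i, u i g) / w i

/-- An allocation `A` is weighted proportional (WPROP) if
`u_i(A_i) ≥ (w_i/W)·u_i(M)` for every agent `i`, where `W` is the sum of the weights. -/
def IsWPROP {n m : ℕ} (w : Fin n → ℝ) (u : Fin n → Fin m → ℝ)
    (A : Fin n → Finset (Fin m)) : Prop :=
  ∀ i : Fin n, w i / (∑ j, w j) * (∑ g, u i g) ≤ ∑ g ∈ A i, u i g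

/-- A probability distribution `D` on `[0,1]` is `(α,β)`-PDF-bounded if it has a density
`f` (with respect to Lebesgue measure restricted to `[0,1]`) satisfying `α ≤ f(x) ≤ β`
for all `x ∈ [0,1]`.  (Such a distribution is in particular non-atomic.) -/
def PDFBounded (α β : ℝ) (D : MeasureTheory.Measure ℝ) : Prop :=
  ∃ f : ℝ → ℝ≥0∞,
    D = (MeasureTheory.volume.restrict (Set.Icc (0:ℝ) 1)).withDensity f ∧
    ∀ x ∈ Set.Icc (0:ℝ) 1, ENNReal.ofReal α ≤ f x ∧ f x ≤ ENNReal.ofReal β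

/-- The joint distribution of the `n·m` utilities `u i g`, drawn independently from `D`. -/
noncomputable def utilMeasure (n m : ℕ) (D : MeasureTheory.Measure ℝ) :
    MeasureTheory.Measure (Fin n → Fin m → ℝ) :=
  MeasureTheory.Measure.pi fun _ : Fin n => MeasureTheory.Measure.pi fun _ : Fin m => D

/-- The bundle received by agent `i` in a run of the weighted picking sequence algorithm. -/
def runBundle {n m : ℕ} (picker : Fin m → Fin n) (item : Fin m → Fin m) (i : Fin n) :
    Finset (Fin m) :=
  (Finset.univ.filter fun s : Fin m => picker s = i).image item

/-!
If every pick is among the best `L` items of its picker, envy-freeness is deterministic: an agent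
values her own items at nearly `1`, while she values few of the items in another bundle that
highly, and her last picks make up for the one-item head start of the other agent.

If the first pick outside its picker's best `L` items is made by `k`, then each of those `L` items
has been lost to an earlier picker, who may herself have settled for a lower-ranked item because
better ones were lost, and so on. Recording who lost what to whom, only inside the cluster of
agents reached in this way, gives a matching from at least `L` lost ranking slots into at most `Q`
taken slots per cluster agent. Independent uniform rankings realise a prescribed matching of `s`
slots with probability at most about `(e / m) ^ s`, and since `Q * n` is a small fraction of `m`
this beats the number of records, whatever the size of the cluster.
-/

section PrefRank

variable {ι γ : Type*} [Fintype ι] [LinearOrder γ]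

/-- The position of item `a` in the preference order of an agent with utilities `x`: the number of
items strictly preferred to `a`, so that a most preferred item has rank `0`. -/
def prefRank (x : ι → γ) (a : ι) : ℕ :=
  #{b | x a < x b}

theorem prefRank_lt_card (x : ι → γ) (a : ι) : prefRank x a < Fintype.card ι :=
  card_lt_card (filter_ssubset.2 ⟨a, mem_univ a, lt_irrefl _⟩)

theorem prefRank_anti {x : ι → γ} {a b : ι} (h : x a ≤ x b) : prefRank x b ≤ prefRank x a :=
  card_le_card (monotone_filter_right _ fun _ _ hc => h.trans_lt hc)

theorem prefRank_lt_prefRank {x : ι → γ} {a b : ι} : prefRank x a < prefRank x b ↔ x b < x a := by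
  refine ⟨fun h => lt_of_not_ge fun hab => h.not_ge (prefRank_anti hab), fun h => ?_⟩
  exact card_lt_card ((ssubset_iff_of_subset (monotone_filter_right _ fun _ _ hc => h.trans hc)).2
    ⟨a, by simpa using h, by simp⟩)

theorem prefRank_injective {x : ι → γ} (hx : Function.Injective x) :
    Function.Injective (prefRank x) := fun _ _ h =>
  hx (le_antisymm (not_lt.1 fun hlt => (prefRank_lt_prefRank.2 hlt).ne h)
    (not_lt.1 fun hlt => (prefRank_lt_prefRank.2 hlt).ne' h))

theorem exists_prefRank_eq {x : ι → γ} (hx : Function.Injective x) {p : ℕ}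
    (hp : p < Fintype.card ι) : ∃ a, prefRank x a = p := by
  have himage : univ.image (prefRank x) = range (Fintype.card ι) := by
    refine eq_of_subset_of_card_le
      (image_subset_iff.2 fun a _ => mem_range.2 (prefRank_lt_card x a)) ?_
    rw [card_image_of_injective _ (prefRank_injective hx), card_range, card_univ]
  simpa using himage.ge (mem_range.2 hp)

theorem prefRank_comp_perm (x : ι → γ) (σ : Equiv.Perm ι) (a : ι) :
    prefRank (x ∘ σ) a = prefRank x (σ a) :=
  card_bij (fun b _ => σ b) (by simp) (fun _ _ _ _ h => σ.injective h)
    fun b hb => ⟨σ.symm b, by simpa using hb, σ.apply_symm_apply b⟩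

theorem card_filter_prefRank_lt_le {x : ι → γ} (hx : Function.Injective x) (L : ℕ) :
    #{a | prefRank x a < L} ≤ L := by
  simpa using card_le_card_of_injOn (s := {a | prefRank x a < L}) (t := range L) (prefRank x)
    (fun a ha => by simpa using ha) (prefRank_injective hx).injOn

variable [TopologicalSpace γ] [OrderClosedTopology γ] [SecondCountableTopology γ]
  [MeasurableSpace γ] [OpensMeasurableSpace γ]

theorem measurable_prefRank (a : ι) : Measurable fun x : ι → γ => prefRank x a := by
  simp only [prefRank, card_filter]
  exact Finset.measurable_sum _ fun b _ => Measurable.ite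
    (measurableSet_lt (measurable_pi_apply a) (measurable_pi_apply b))
    measurable_const measurable_const

end PrefRank

theorem measurableSet_injective {ι γ : Type*} [Countable ι] [MeasurableSpace γ] [MeasurableEq γ] :
    MeasurableSet {x : ι → γ | Function.Injective x} := by
  simp only [Function.Injective, Set.ofPred_forall]
  refine MeasurableSet.iInter fun a => MeasurableSet.iInter fun b => ?_
  by_cases hab : a = b
  · simp [hab]
  · simp only [hab, imp_false]
    exact (measurableSet_eq_fun (measurable_pi_apply a) (measurable_pi_apply b)).compl

section RankEvent

open scoped Nat

theorem pow_mul_factorial_le_pow_mul_descFactorial {m s : ℕ} (h : s ≤ m) :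
    m ^ s * s ! ≤ s ^ s * m.descFactorial s := by
  rw [← Nat.descFactorial_self, Nat.descFactorial_eq_prod_range, Nat.descFactorial_eq_prod_range,
    ← card_range s, ← prod_const, ← prod_const, card_range, ← prod_mul_distrib, ← prod_mul_distrib]
  refine prod_le_prod' fun i _ => ?_
  rw [Nat.mul_sub, Nat.mul_sub, mul_comm s m]
  exact Nat.sub_le_sub_left (Nat.mul_le_mul_right i h) _

theorem natCast_pow_le_factorial_mul_exp_pow (a n : ℕ) : (a : ℝ) ^ n ≤ n ! * Real.exp 1 ^ a := by
  have := Real.pow_div_factorial_le_exp (a : ℝ) a.cast_nonneg n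
  rwa [div_le_iff₀' (by positivity), ← mul_one (a : ℝ), Real.exp_nat_mul, mul_one] at this

theorem div_exp_pow_le_descFactorial {m s : ℕ} (h : s ≤ m) :
    ((m : ℝ) / Real.exp 1) ^ s ≤ m.descFactorial s := by
  have hnat : (m : ℝ) ^ s * s ! ≤ s ^ s * m.descFactorial s := by
    exact_mod_cast pow_mul_factorial_le_pow_mul_descFactorial h
  rw [div_pow, div_le_iff₀ (by positivity)]
  refine le_of_mul_le_mul_right (hnat.trans ?_) (by positivity : (0 : ℝ) < s !)
  calc (s : ℝ) ^ s * m.descFactorial s ≤ s ! * Real.exp 1 ^ s * m.descFactorial s := by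
        gcongr
        exact natCast_pow_le_factorial_mul_exp_pow s s
    _ = m.descFactorial s * Real.exp 1 ^ s * s ! := by ring

theorem measurePreserving_comp_perm {ι Ω : Type*} [Fintype ι] [MeasurableSpace Ω] (μ : Measure Ω)
    [SigmaFinite μ] (σ : Equiv.Perm ι) :
    MeasurePreserving (fun x : ι → Ω => x ∘ σ) (Measure.pi fun _ => μ) (Measure.pi fun _ => μ) :=
  measurePreserving_arrowCongr' (fun _ => μ) (fun _ => μ) σ.symm (MeasurableEquiv.refl Ω)
    fun _ => MeasurePreserving.id μ

/-- A slot `⟨k, p⟩` stands for the item of rank `p` of agent `k`.  It is a (non-dependent) sigma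
type so that `Finset.sigma` assembles sets of slots from sets of ranks. -/
abbrev Slot (κ : Type*) :=
  Σ _ : κ, ℕ

variable {ι σ : Type*} [Fintype ι]

/-- The event that the utilities `x` of an agent are pairwise distinct and, for each `s`, her item
of rank `p s` is `g s`. -/
def rankEvent (p : σ → ℕ) (g : σ → ι) : Set (ι → ℝ) :=
  {x | Function.Injective x ∧ ∀ s, prefRank x (g s) = p s}

theorem measurableSet_rankEvent [Countable σ] (p : σ → ℕ) (g : σ → ι) :
    MeasurableSet (rankEvent p g) := by
  have : rankEvent p g = {x | Function.Injective x} ∩ ⋂ s, {x | prefRank x (g s) = p s} := by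
    ext x
    simp [rankEvent]
  rw [this]
  exact measurableSet_injective.inter
    (.iInter fun s => measurable_prefRank (g s) (measurableSet_singleton _))

theorem rankEvent_comp_perm (p : σ → ℕ) (g : σ → ι) (τ : Equiv.Perm ι) :
    (fun x : ι → ℝ => x ∘ τ) ⁻¹' rankEvent p g = rankEvent p (τ ∘ g) := by
  ext x
  simp only [rankEvent, Set.mem_preimage, Set.mem_ofPred_eq, prefRank_comp_perm,
    Function.comp_apply, Equiv.injective_comp]

variable [Fintype σ] (D : Measure ℝ) [IsProbabilityMeasure D]

/- By exchangeability all embeddings `σ ↪ ι` give the same probability, and the corresponding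
events are disjoint. -/
theorem measureReal_rankEvent_embedding_le (p : σ → ℕ) (g : σ ↪ ι) :
    (Measure.pi fun _ : ι => D).real (rankEvent p g) ≤
      (Real.exp 1 / Fintype.card ι) ^ Fintype.card σ := by
  classical
  set ν := Measure.pi fun _ : ι => D
  have hexch (g' : σ ↪ ι) : ν.real (rankEvent p g') = ν.real (rankEvent p g) := by
    obtain ⟨τ, rfl⟩ := Equiv.Perm.exists_smul_eq_embedding g g'
    rw [show ⇑(τ • g) = τ ∘ g from rfl, ← rankEvent_comp_perm]
    exact (measurePreserving_comp_perm D τ).measureReal_preimage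
      (measurableSet_rankEvent p g).nullMeasurableSet
  have hdisj : Set.PairwiseDisjoint ↑(univ : Finset (σ ↪ ι)) fun g : σ ↪ ι => rankEvent p g := by
    intro g₁ _ g₂ _ hne
    refine Set.disjoint_left.2 fun x hx₁ hx₂ => hne (DFunLike.ext _ _ fun s => ?_)
    exact prefRank_injective hx₁.1 ((hx₁.2 s).trans (hx₂.2 s).symm)
  have hsum :
      ((Fintype.card ι).descFactorial (Fintype.card σ) : ℝ) * ν.real (rankEvent p g) ≤ 1 := by
    have := sum_measureReal_le_measureReal_univ (μ := ν)
      (fun (g : σ ↪ ι) _ => measurableSet_rankEvent p g) hdisj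
    rwa [sum_congr rfl fun g' _ => hexch g', sum_const, card_univ, Fintype.card_embedding_eq,
      nsmul_eq_mul, probReal_univ] at this
  have hcard : Fintype.card σ ≤ Fintype.card ι := Fintype.card_le_of_embedding g
  rcases (Fintype.card ι).eq_zero_or_pos with hι | hι
  · simp [Nat.le_zero.1 (hι ▸ hcard)]
  rw [← inv_div, inv_pow, ← one_div, le_div_iff₀' (by positivity)]
  exact (mul_le_mul_of_nonneg_right (div_exp_pow_le_descFactorial hcard)
    measureReal_nonneg).trans hsum

theorem measureReal_rankEvent_le {p : σ → ℕ} (hp : Function.Injective p) (g : σ → ι) :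
    (Measure.pi fun _ : ι => D).real (rankEvent p g) ≤
      (Real.exp 1 / Fintype.card ι) ^ Fintype.card σ := by
  by_cases hg : Function.Injective g
  · exact measureReal_rankEvent_embedding_le D p ⟨g, hg⟩
  · have hempty : rankEvent p g = ∅ := Set.eq_empty_of_forall_notMem fun x hx =>
      hg fun s t hst => hp (by rw [← hx.2 s, ← hx.2 t, hst])
    rw [hempty, measureReal_empty]
    positivity

variable {κ : Type*} [Fintype κ]

theorem measureReal_forall_prefRank_le {slot : σ → Slot κ} (hslot : Function.Injective slot)
    (g : σ → ι) :
    (Measure.pi fun _ : κ => Measure.pi fun _ : ι => D).real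
        {u | (∀ k, Function.Injective (u k)) ∧ ∀ s, prefRank (u (slot s).1) (g s) = (slot s).2} ≤
      (Real.exp 1 / Fintype.card ι) ^ Fintype.card σ := by
  classical
  have hrows : {u : κ → ι → ℝ | (∀ k, Function.Injective (u k)) ∧
        ∀ s, prefRank (u (slot s).1) (g s) = (slot s).2} =
      Set.univ.pi fun k => rankEvent (fun s : {s // (slot s).1 = k} => (slot s).2) (g ·) := by
    ext u
    simp only [rankEvent, Set.mem_pi, Set.mem_univ, Set.mem_ofPred_eq, forall_true_left, forall_and,
      Subtype.forall]
    exact and_congr_right' ⟨fun h k s hs => hs ▸ h s, fun h s => h _ s rfl⟩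
  have hinj (k : κ) : Function.Injective fun s : {s // (slot s).1 = k} => (slot s).2 :=
    fun s t h => Subtype.ext (hslot (Sigma.ext (s.2.trans t.2.symm) (heq_of_eq h)))
  rw [hrows, measureReal_def, Measure.pi_pi, ENNReal.toReal_prod, ← card_univ (α := σ),
    card_eq_sum_card_fiberwise (f := fun s => (slot s).1) (t := univ) (fun _ _ => by simp),
    ← prod_pow_eq_pow_sum]
  refine prod_le_prod (fun _ _ => ENNReal.toReal_nonneg) fun k _ => ?_
  rw [← Fintype.card_subtype]
  exact measureReal_rankEvent_le D (hinj k) _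

end RankEvent

section MatchEvent

variable {κ ι σ : Type*} [Fintype ι]

/-- The event that all utilities of each agent are pairwise distinct and, for every `s`, the slots
`src s` and `tgt s` hold the same item. -/
def matchEvent (ι : Type*) [Fintype ι] (src tgt : σ → Slot κ) : Set (κ → ι → ℝ) :=
  {u | (∀ k, Function.Injective (u k)) ∧ ∀ s, ∃ a,
    prefRank (u (src s).1) a = (src s).2 ∧ prefRank (u (tgt s).1) a = (tgt s).2}

theorem matchEvent_subset_iUnion (src tgt : σ → Slot κ) :
    matchEvent ι src tgt ⊆ ⋃ g : Set.range tgt → ι,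
      {u | (∀ k, Function.Injective (u k)) ∧ ∀ s : σ ⊕ Set.range tgt,
        prefRank (u (Sum.elim src (↑) s).1) (Sum.elim (g ∘ Set.rangeFactorization tgt) g s) =
          (Sum.elim src (↑) s).2} := by
  rintro u ⟨hinj, hu⟩
  have hitem : ∀ t : Set.range tgt, ∃ a, prefRank (u t.1.1) a = t.1.2 := by
    rintro ⟨_, s, rfl⟩
    obtain ⟨a, -, ha⟩ := hu s
    exact ⟨a, ha⟩
  choose g hg using hitem
  refine Set.mem_iUnion.2 ⟨g, hinj, Sum.rec (fun s => ?_) hg⟩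
  obtain ⟨a, hsrc, htgt⟩ := hu s
  have hga : g (Set.rangeFactorization tgt s) = a :=
    prefRank_injective (hinj _) ((hg (Set.rangeFactorization tgt s)).trans htgt.symm)
  simpa [hga] using hsrc

/- Once the items in the target slots are chosen, the items in all the source and target slots are
determined; there are at most `card σ` target slots, hence at most `m ^ card σ` choices. -/
theorem measureReal_matchEvent_le [Fintype κ] [Fintype σ] (D : Measure ℝ) [IsProbabilityMeasure D]
    {src tgt : σ → Slot κ} (hsrc : Function.Injective src) (hne : ∀ s t, tgt s ≠ src t) :
    (Measure.pi fun _ : κ => Measure.pi fun _ : ι => D).real (matchEvent ι src tgt) ≤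
      (Real.exp 1 ^ 2 / Fintype.card ι) ^ Fintype.card σ := by
  classical
  rcases isEmpty_or_nonempty ι with hι | hι
  · rcases isEmpty_or_nonempty σ with hσ | ⟨⟨s⟩⟩
    · simp
    · have hempty : matchEvent ι src tgt = ∅ :=
        Set.eq_empty_of_forall_notMem fun u hu => hι.elim (hu.2 s).choose
      rw [hempty, measureReal_empty]
      positivity
  have hslots : Function.Injective (Sum.elim src ((↑) : Set.range tgt → Slot κ)) :=
    hsrc.sumElim Subtype.val_injective fun s ⟨_, t, ht⟩ => by simpa [← ht] using (hne t s).symm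
  refine (measureReal_mono (matchEvent_subset_iUnion src tgt)).trans
    ((measureReal_iUnion_fintype_le _).trans ?_)
  calc _ ≤ ∑ _g : Set.range tgt → ι,
        (Real.exp 1 / Fintype.card ι) ^ Fintype.card (σ ⊕ Set.range tgt) :=
        sum_le_sum fun g _ => measureReal_forall_prefRank_le D hslots _
    _ = (Real.exp 1 / Fintype.card ι) ^ Fintype.card σ *
          Real.exp 1 ^ Fintype.card (Set.range tgt) := by
        rw [sum_const, card_univ, Fintype.card_fun, Fintype.card_sum, nsmul_eq_mul, pow_add,
          div_pow _ _ (Fintype.card (Set.range tgt))]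
        push_cast
        field_simp
    _ ≤ (Real.exp 1 / Fintype.card ι) ^ Fintype.card σ * Real.exp 1 ^ Fintype.card σ := by
        gcongr
        · exact Real.one_le_exp zero_le_one
        · exact Fintype.card_range_le tgt
    _ = (Real.exp 1 ^ 2 / Fintype.card ι) ^ Fintype.card σ := by
        rw [← mul_pow, sq, div_mul_eq_mul_div]

end MatchEvent

section Hitting

variable {σ χ γ : Type*} [Fintype σ] [Fintype χ] [DecidableEq σ] [DecidableEq γ]

theorem card_piFinset_filter_mem_le (T : Finset γ) {B : χ → Finset γ} {Q : ℕ}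
    (hQ : ∀ k, #(B k) ≤ Q) (φ : χ ↪ σ) :
    #{τ ∈ Fintype.piFinset fun _ : σ => T | ∀ k, τ (φ k) ∈ B k} ≤
      Q ^ Fintype.card χ * #T ^ (Fintype.card σ - Fintype.card χ) := by
  classical
  have hsub : {τ ∈ Fintype.piFinset fun _ : σ => T | ∀ k, τ (φ k) ∈ B k} ⊆
      Fintype.piFinset fun s => {t ∈ T | ∀ k, φ k = s → t ∈ B k} := fun τ hτ => by
    simp only [mem_filter, Fintype.mem_piFinset] at hτ ⊢
    exact fun s => ⟨hτ.1 s, by rintro k rfl; exact hτ.2 k⟩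
  refine (card_le_card hsub).trans ?_
  rw [Fintype.card_piFinset, ← prod_mul_prod_compl (univ.map φ)]
  refine Nat.mul_le_mul ?_ ?_
  · rw [prod_map]
    refine prod_le_pow_card _ _ _ fun k _ => (card_le_card fun t ht => ?_).trans (hQ k)
    exact (mem_filter.1 ht).2 k rfl
  · rw [← card_univ (α := χ), ← card_map φ, ← card_compl]
    exact prod_le_pow_card _ _ _ fun s _ => card_filter_le _ _

theorem card_piFinset_filter_hits_le (T : Finset γ) {B : χ → Finset γ} {Q : ℕ}
    (hB : Pairwise fun k k' => Disjoint (B k) (B k')) (hQ : ∀ k, #(B k) ≤ Q) :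
    #{τ ∈ Fintype.piFinset fun _ : σ => T | ∀ k, ∃ s, τ s ∈ B k} ≤
      (Fintype.card σ).descFactorial (Fintype.card χ) *
        (Q ^ Fintype.card χ * #T ^ (Fintype.card σ - Fintype.card χ)) := by
  classical
  have hsub : {τ ∈ Fintype.piFinset fun _ : σ => T | ∀ k, ∃ s, τ s ∈ B k} ⊆
      (univ : Finset (χ ↪ σ)).biUnion fun φ =>
        {τ ∈ Fintype.piFinset fun _ : σ => T | ∀ k, τ (φ k) ∈ B k} := fun τ hτ => by
    obtain ⟨hτT, hhit⟩ := mem_filter.1 hτ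
    choose φ hφ using hhit
    have hinj : Function.Injective φ := fun k k' h => by
      by_contra hne
      exact disjoint_left.1 (hB hne) (hφ k) (h ▸ hφ k')
    exact mem_biUnion.2 ⟨⟨φ, hinj⟩, mem_univ _, mem_filter.2 ⟨hτT, hφ⟩⟩
  rw [← Fintype.card_embedding_eq, ← card_univ]
  exact (card_le_card hsub).trans
    (card_biUnion_le_card_mul _ _ _ fun φ _ => card_piFinset_filter_mem_le T hQ φ)

end Hitting

section Cluster

/-- What a cluster records about one of its agents: a depth `b` in her preference list, such that
her `b` best items are all taken, and the set of ranks below `b` of the items she took herself. -/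
abbrev PickRecord :=
  Σ _ : ℕ, Finset ℕ

/-- The ranks within the recorded depth whose items were taken by other agents. -/
def PickRecord.lost (o : PickRecord) : Finset ℕ :=
  range o.1 \ o.2

/-- The records with depth between `lo` and `hi` and at most `Q` own picks. -/
def pickRecords (Q lo hi : ℕ) : Finset PickRecord :=
  (Icc lo hi).sigma fun b => {O ∈ (range b).powerset | #O ≤ Q}

theorem mem_pickRecords {Q lo hi : ℕ} {o : PickRecord} :
    o ∈ pickRecords Q lo hi ↔ (lo ≤ o.1 ∧ o.1 ≤ hi) ∧ o.2 ⊆ range o.1 ∧ #o.2 ≤ Q := by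
  simp [pickRecords]

theorem sum_pow_card_lost_le {Q lo hi : ℕ} (hlo : 4 * Q ≤ lo) {ρ : ℝ} (hρ0 : 0 ≤ ρ)
    (hρ : ρ ≤ 1 / 64) :
    ∑ o ∈ pickRecords Q lo hi, ρ ^ #o.lost ≤ ∑ b ∈ Icc lo hi, (1 / 8 : ℝ) ^ b := by
  rw [pickRecords, sum_sigma]
  refine sum_le_sum fun b hb => ?_
  have hterm : ∀ O ∈ {O ∈ (range b).powerset | #O ≤ Q},
      ρ ^ #(PickRecord.lost ⟨b, O⟩) ≤ (1 / 16 : ℝ) ^ b := fun O hO => by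
    obtain ⟨hOb, hOQ⟩ : O ⊆ range b ∧ #O ≤ Q := by simpa using hO
    have hlost : #(PickRecord.lost ⟨b, O⟩) = b - #O := by
      rw [PickRecord.lost, card_sdiff_of_subset hOb, card_range]
    calc ρ ^ #(PickRecord.lost ⟨b, O⟩) ≤ (1 / 64 : ℝ) ^ (b - #O) := by rw [hlost]; gcongr
      _ = (1 / 2 : ℝ) ^ (6 * (b - #O)) := by rw [pow_mul]; norm_num
      _ ≤ (1 / 2 : ℝ) ^ (4 * b) :=
        pow_le_pow_of_le_one (by norm_num) (by norm_num) (by have := (mem_Icc.1 hb).1; omega)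
      _ = (1 / 16 : ℝ) ^ b := by rw [pow_mul]; norm_num
  calc _ ≤ #{O ∈ (range b).powerset | #O ≤ Q} • (1 / 16 : ℝ) ^ b := sum_le_card_nsmul _ _ _ hterm
    _ ≤ 2 ^ b • (1 / 16 : ℝ) ^ b := by
      gcongr
      exact (card_filter_le _ _).trans (by simp)
    _ = (1 / 8 : ℝ) ^ b := by
      rw [nsmul_eq_mul, Nat.cast_pow, ← mul_pow]
      norm_num

theorem sum_powerset_factorial_mul_pow_le {α : Type*} (s : Finset α) {n : ℕ} (hs : #s ≤ n) {x : ℝ}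
    (hx0 : 0 ≤ x) (hx1 : x < 1) :
    ∑ X ∈ s.powerset, ((#X).factorial : ℝ) * (x / n) ^ #X ≤ (1 - x)⁻¹ := by
  have hterm (y : ℕ) : (#s).choose y • ((y.factorial : ℝ) * (x / n) ^ y) ≤ x ^ y := by
    have hchoose : ((#s).choose y * y.factorial : ℝ) ≤ (n : ℝ) ^ y := by
      rw [mul_comm]
      exact_mod_cast (Nat.descFactorial_eq_factorial_mul_choose _ _).symm.trans_le
        ((Nat.descFactorial_le_pow _ _).trans (Nat.pow_le_pow_left hs y))
    calc (#s).choose y • ((y.factorial : ℝ) * (x / n) ^ y)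
        = ((#s).choose y * y.factorial : ℝ) * (x / n) ^ y := by rw [nsmul_eq_mul, mul_assoc]
      _ ≤ (n : ℝ) ^ y * (x / n) ^ y := by gcongr
      _ = (n * (x / n)) ^ y := (mul_pow _ _ _).symm
      _ ≤ x ^ y := by
        gcongr
        rw [mul_div_left_comm]
        exact mul_le_of_le_one_right hx0 (div_self_le_one _)
  rw [sum_powerset_apply_card fun y => (y.factorial : ℝ) * (x / n) ^ y]
  calc _ ≤ ∑ y ∈ Ico 0 (#s + 1), x ^ y := by
        rw [← range_eq_Ico]
        exact sum_le_sum fun y _ => hterm y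
    _ ≤ (1 - x)⁻¹ := by simpa using geom_sum_Ico_le_of_lt_one hx0 hx1 (m := 0) (n := #s + 1)

variable {κ : Type*}

/-- The possible records of agent `k` in a cluster with root `j` and further agents `X`, when there
are `m` items and the `L` best items of `j` are taken.  Agents outside the cluster get an empty
record. -/
def clusterRecords [DecidableEq κ] (m Q L : ℕ) (j : κ) (X : Finset κ) (k : κ) : Finset PickRecord :=
  if k = j then pickRecords Q L L else if k ∈ X then pickRecords Q (4 * Q) m else {⟨0, ∅⟩}

theorem card_snd_le_of_mem_clusterRecords [DecidableEq κ] {m Q L : ℕ} {j k : κ} {X : Finset κ}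
    {o : PickRecord} (ho : o ∈ clusterRecords m Q L j X k) : #o.2 ≤ Q := by
  unfold clusterRecords at ho
  split_ifs at ho
  · exact (mem_pickRecords.1 ho).2.2
  · exact (mem_pickRecords.1 ho).2.2
  · simp [mem_singleton.1 ho]

variable [Fintype κ]

/-- The slots of the items that the agents of a cluster lost to other agents. -/
def lostSlots (c : κ → PickRecord) : Finset (Slot κ) :=
  univ.sigma fun k => (c k).lost

/-- The slots at which these items may have been picked: at a small rank or by an agent of the
cluster. -/
def takerSlots (Q : ℕ) (c : κ → PickRecord) : Finset (Slot κ) :=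
  univ.sigma fun k => range (4 * Q) ∪ (c k).2

theorem card_takerSlots_le {Q : ℕ} {c : κ → PickRecord} (hc : ∀ k, #(c k).2 ≤ Q) :
    #(takerSlots Q c) ≤ 5 * Q * Fintype.card κ := by
  have hslots (k : κ) : #(range (4 * Q) ∪ (c k).2) ≤ 5 * Q := by
    have := card_union_le (range (4 * Q)) (c k).2
    rw [card_range] at this
    linarith [hc k]
  rw [takerSlots, card_sigma]
  simpa [mul_comm] using sum_le_card_nsmul univ _ _ fun k _ => hslots k

variable [DecidableEq κ]

/-- The possible assignments of lost slots to the slots at which their items were picked.  Every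
further agent `k ∈ X` belongs to the cluster because she picked one of these items. -/
def clusterMatchings (Q : ℕ) (X : Finset κ) (c : κ → PickRecord) :
    Finset (lostSlots c → Slot κ) :=
  {τ ∈ Fintype.piFinset fun _ => takerSlots Q c \ lostSlots c |
    ∀ k : X, ∃ s, τ s ∈ (c k).2.map (.sigmaMk (k : κ))}

theorem card_clusterMatchings_le [Nonempty κ] {Q : ℕ} (X : Finset κ)
    {c : κ → PickRecord} (hc : ∀ k, #(c k).2 ≤ Q) :
    (#(clusterMatchings Q X c) : ℝ) ≤ (#X).factorial * (1 / Fintype.card κ) ^ #X *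
      (Real.exp 1 * (5 * Q * Fintype.card κ)) ^ #(lostSlots c) := by
  set E := #(lostSlots c)
  set n := Fintype.card κ
  have hcount : #(clusterMatchings Q X c) ≤
      E.descFactorial #X * (Q ^ #X * (5 * Q * n) ^ (E - #X)) := by
    have hhits := card_piFinset_filter_hits_le (σ := lostSlots c) (takerSlots Q c \ lostSlots c)
      (B := fun k : X => (c k).2.map (.sigmaMk (k : κ))) (Q := Q)
      (fun k k' hne => disjoint_left.2 fun t ht ht' => hne ?_) (fun k => by simpa using hc k)
    · rw [Fintype.card_coe, Fintype.card_coe] at hhits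
      refine hhits.trans (Nat.mul_le_mul_left _ (Nat.mul_le_mul_left _ (Nat.pow_le_pow_left ?_ _)))
      exact (card_le_card sdiff_subset).trans (card_takerSlots_le hc)
    · obtain ⟨p, -, rfl⟩ := mem_map.1 ht
      obtain ⟨p', -, hp'⟩ := mem_map.1 ht'
      exact Subtype.ext (congrArg Sigma.fst hp').symm
  rcases lt_or_ge E #X with hlt | hle
  · rw [Nat.descFactorial_of_lt hlt, zero_mul, Nat.le_zero] at hcount
    rw [hcount, Nat.cast_zero]
    positivity
  obtain ⟨d, hd⟩ := Nat.exists_eq_add_of_le hle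
  have hn : (0 : ℝ) < n := by exact_mod_cast Fintype.card_pos
  rw [hd, Nat.add_sub_cancel_left, ← hd] at hcount
  calc (#(clusterMatchings Q X c) : ℝ)
      ≤ E.descFactorial #X * (Q ^ #X * (5 * Q * n) ^ d) := by exact_mod_cast hcount
    _ ≤ (#X).factorial * Real.exp 1 ^ E * ((5 * Q) ^ #X * (5 * Q * n) ^ d) := by
      gcongr
      · exact (Nat.cast_le.2 (Nat.descFactorial_le_pow _ _)).trans
          (by exact_mod_cast natCast_pow_le_factorial_mul_exp_pow E #X)
      · linarith [Q.cast_nonneg (α := ℝ)]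
    _ = (#X).factorial * Real.exp 1 ^ E *
          (((1 / n : ℝ) * (5 * Q * n)) ^ #X * (5 * Q * n) ^ d) := by
      congr 3
      field_simp
    _ = (#X).factorial * (1 / n) ^ #X * (Real.exp 1 * (5 * Q * n)) ^ E := by
      rw [mul_pow (1 / n : ℝ), mul_pow (Real.exp 1), hd, pow_add (5 * Q * n : ℝ)]
      ring

theorem sum_Icc_one_div_eight_pow_le {lo hi : ℕ} (hlo : 0 < lo) :
    ∑ b ∈ Icc lo hi, (1 / 8 : ℝ) ^ b ≤ 1 / 2 := by
  rw [← Ico_add_one_right_eq_Icc]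
  refine (geom_sum_Ico_le_of_lt_one (by norm_num) (by norm_num)).trans ?_
  have : (1 / 8 : ℝ) ^ lo ≤ 1 / 8 := pow_le_of_le_one (by norm_num) (by norm_num) hlo.ne'
  rw [div_le_iff₀ (by norm_num)]
  linarith

theorem sum_pow_card_lostSlots_le {m Q L : ℕ} (hQ : 0 < Q) (hL : 4 * Q ≤ L) {j : κ}
    {X : Finset κ} (hX : X ⊆ univ.erase j) {ρ : ℝ} (hρ0 : 0 ≤ ρ) (hρ : ρ ≤ 1 / 64) :
    ∑ c ∈ Fintype.piFinset (clusterRecords m Q L j X), ρ ^ #(lostSlots c) ≤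
      (1 / 2) ^ #X * (1 / 8) ^ L := by
  have hroot : ∑ o ∈ clusterRecords m Q L j X j, ρ ^ #o.lost ≤ (1 / 8) ^ L := by
    simpa [clusterRecords] using sum_pow_card_lost_le (hi := L) hL hρ0 hρ
  have hother : ∀ k ∈ univ.erase j, ∑ o ∈ clusterRecords m Q L j X k, ρ ^ #o.lost ≤
      if k ∈ X then 1 / 2 else 1 := fun k hk => by
    by_cases hkX : k ∈ X
    · simpa [clusterRecords, ne_of_mem_erase hk, hkX] using
        (sum_pow_card_lost_le le_rfl hρ0 hρ).trans (sum_Icc_one_div_eight_pow_le (by positivity))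
    · simp [clusterRecords, ne_of_mem_erase hk, hkX, PickRecord.lost]
  have hnonneg (k : κ) : 0 ≤ ∑ o ∈ clusterRecords m Q L j X k, ρ ^ #o.lost :=
    sum_nonneg fun _ _ => by positivity
  calc _ = ∏ k, ∑ o ∈ clusterRecords m Q L j X k, ρ ^ #o.lost := by
        rw [prod_univ_sum]
        exact sum_congr rfl fun c _ => by rw [lostSlots, card_sigma, prod_pow_eq_pow_sum]
    _ ≤ (∏ k ∈ univ.erase j, if k ∈ X then (1 / 2 : ℝ) else 1) * (1 / 8) ^ L := by
        rw [← prod_erase_mul _ _ (mem_univ j)]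
        exact mul_le_mul (prod_le_prod (fun k _ => hnonneg k) hother) hroot (hnonneg j)
          (prod_nonneg fun _ _ => by positivity)
    _ = (1 / 2) ^ #X * (1 / 8) ^ L := by
        rw [prod_ite_mem, inter_eq_right.2 hX, prod_const]

variable {ι : Type*} [Fintype ι]

/-- The event that some cluster with root `j` explains how the `L` best items of `j` were taken. -/
def blockedEvent (ι : Type*) [Fintype ι] (Q L : ℕ) (j : κ) : Set (κ → ι → ℝ) :=
  ⋃ X ∈ (univ.erase j).powerset,
    ⋃ c ∈ Fintype.piFinset (clusterRecords (Fintype.card ι) Q L j X),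
      ⋃ τ ∈ clusterMatchings Q X c, matchEvent ι (↑) τ

variable (D : Measure ℝ) [IsProbabilityMeasure D]

theorem measureReal_biUnion_matchEvent_le [Nonempty κ] {Q : ℕ} (X : Finset κ)
    {c : κ → PickRecord} (hc : ∀ k, #(c k).2 ≤ Q) :
    (Measure.pi fun _ : κ => Measure.pi fun _ : ι => D).real
        (⋃ τ ∈ clusterMatchings Q X c, matchEvent ι (↑) τ) ≤
      (#X).factorial * (1 / Fintype.card κ) ^ #X *
        (5 * Real.exp 1 ^ 3 * (Q * Fintype.card κ / Fintype.card ι)) ^ #(lostSlots c) := by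
  set E := #(lostSlots c)
  have hmatch : ∀ τ ∈ clusterMatchings Q X c,
      (Measure.pi fun _ : κ => Measure.pi fun _ : ι => D).real (matchEvent ι (↑) τ) ≤
        (Real.exp 1 ^ 2 / Fintype.card ι) ^ E := fun τ hτ => by
    have hne (s t : lostSlots c) : τ s ≠ t := fun h =>
      (mem_sdiff.1 (Fintype.mem_piFinset.1 (mem_filter.1 hτ).1 s)).2 (h ▸ t.2)
    simpa [E] using measureReal_matchEvent_le (ι := ι) D Subtype.val_injective hne
  calc _ ≤ ∑ _τ ∈ clusterMatchings Q X c, (Real.exp 1 ^ 2 / Fintype.card ι : ℝ) ^ E :=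
        (measureReal_biUnion_finset_le _ _).trans (sum_le_sum hmatch)
    _ = #(clusterMatchings Q X c) * (Real.exp 1 ^ 2 / Fintype.card ι : ℝ) ^ E := by
        rw [sum_const, nsmul_eq_mul]
    _ ≤ (#X).factorial * (1 / Fintype.card κ) ^ #X *
          (Real.exp 1 * (5 * Q * Fintype.card κ)) ^ E * (Real.exp 1 ^ 2 / Fintype.card ι) ^ E := by
        gcongr
        exact card_clusterMatchings_le X hc
    _ = _ := by
        rw [mul_assoc, ← mul_pow]
        congr 2
        ring

theorem measureReal_blockedEvent_le (j : κ) {Q L : ℕ} (hQ : 0 < Q) (hL : 4 * Q ≤ L)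
    (hρ : 5 * Real.exp 1 ^ 3 * (Q * Fintype.card κ / Fintype.card ι) ≤ 1 / 64) :
    (Measure.pi fun _ : κ => Measure.pi fun _ : ι => D).real (blockedEvent ι Q L j) ≤
      2 * (1 / 8) ^ L := by
  have : Nonempty κ := ⟨j⟩
  set ρ := 5 * Real.exp 1 ^ 3 * (Q * Fintype.card κ / Fintype.card ι : ℝ)
  have hcluster : ∀ X ∈ (univ.erase j).powerset,
      (Measure.pi fun _ : κ => Measure.pi fun _ : ι => D).real
        (⋃ c ∈ Fintype.piFinset (clusterRecords (Fintype.card ι) Q L j X),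
          ⋃ τ ∈ clusterMatchings Q X c, matchEvent ι (↑) τ) ≤
        (#X).factorial * ((1 / 2) / Fintype.card κ) ^ #X * (1 / 8) ^ L := fun X hX => by
    calc _ ≤ ∑ c ∈ Fintype.piFinset (clusterRecords (Fintype.card ι) Q L j X),
          (#X).factorial * (1 / Fintype.card κ : ℝ) ^ #X * ρ ^ #(lostSlots c) :=
          (measureReal_biUnion_finset_le _ _).trans <| sum_le_sum fun c hc =>
            measureReal_biUnion_matchEvent_le D X fun k =>
              card_snd_le_of_mem_clusterRecords (Fintype.mem_piFinset.1 hc k)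
      _ ≤ (#X).factorial * (1 / Fintype.card κ) ^ #X * ((1 / 2) ^ #X * (1 / 8) ^ L) := by
          rw [← mul_sum]
          gcongr
          exact sum_pow_card_lostSlots_le hQ hL (mem_powerset.1 hX) (by positivity) hρ
      _ = _ := by
          rw [mul_assoc, ← mul_assoc (_ ^ _) (_ ^ _), ← mul_pow]
          ring_nf
  calc _ ≤ ∑ X ∈ (univ.erase j).powerset,
        (#X).factorial * ((1 / 2) / Fintype.card κ : ℝ) ^ #X * (1 / 8) ^ L :=
        (measureReal_biUnion_finset_le _ _).trans (sum_le_sum hcluster)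
    _ ≤ (1 - 1 / 2)⁻¹ * (1 / 8) ^ L := by
        rw [← sum_mul]
        gcongr
        exact sum_powerset_factorial_mul_pow_le _ (card_le_univ _) (by norm_num) (by norm_num)
    _ = 2 * (1 / 8) ^ L := by norm_num

end Cluster

section PickCount

variable {n m : ℕ} {picker : Fin m → Fin n} {j : Fin n} {s t : Fin m}

theorem pickCount_mono (picker : Fin m → Fin n) (k : Fin n) : Monotone (pickCount picker k) :=
  fun _ _ h => card_le_card (monotone_filter_right _ fun _ _ hs => ⟨hs.1.trans_le h, hs.2⟩)

theorem pickCount_lt_pickCount (hs : picker s = j) {t : ℕ} (hst : s < t) :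
    pickCount picker j s < pickCount picker j t :=
  card_lt_card ⟨monotone_filter_right _ fun _ _ h => ⟨h.1.trans hst, h.2⟩,
    fun h => lt_irrefl _ (mem_filter.1 (h (mem_filter.2 ⟨mem_univ s, hst, hs⟩))).2.1⟩

theorem injOn_pickCount (picker : Fin m → Fin n) (j : Fin n) :
    Set.InjOn (fun s : Fin m => pickCount picker j s) {s | picker s = j} := fun s hs t ht h => by
  by_contra hne
  obtain hlt | hlt := lt_or_gt_of_ne hne
  · exact (pickCount_lt_pickCount hs hlt).ne h
  · exact (pickCount_lt_pickCount ht hlt).ne' h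

theorem exists_pickCount_eq {r t : ℕ} (hr : r < pickCount picker j t) :
    ∃ s : Fin m, s < t ∧ picker s = j ∧ pickCount picker j s = r := by
  have himage : image (fun s : Fin m => pickCount picker j s) {s : Fin m | s < t ∧ picker s = j} =
      range (pickCount picker j t) := by
    refine eq_of_subset_of_card_le (image_subset_iff.2 fun s hs => ?_) ?_
    · obtain ⟨hst, hs⟩ := (mem_filter.1 hs).2
      exact mem_range.2 (pickCount_lt_pickCount hs hst)
    · rw [card_image_of_injOn ((injOn_pickCount picker j).mono fun _ hs => (mem_filter.1 hs).2.2),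
        card_range, pickCount]
  obtain ⟨s, hs, hsr⟩ := mem_image.1 (himage ▸ mem_range.2 hr)
  exact ⟨s, (mem_filter.1 hs).2.1, (mem_filter.1 hs).2.2, hsr⟩

theorem card_add_le_pickCount_add_one {S : Finset (Fin m)} {r : ℕ} (hr : r ≤ pickCount picker j t)
    (hS : ∀ s ∈ S, picker s = j ∧ s ≤ t ∧ r ≤ pickCount picker j s) :
    #S + r ≤ pickCount picker j t + 1 := by
  have hcard : #S ≤ #(Icc r (pickCount picker j t)) :=
    card_le_card_of_injOn (fun s => pickCount picker j s)
      (fun s hs => mem_coe.2 (mem_Icc.2 ⟨(hS s hs).2.2, pickCount_mono picker j (hS s hs).2.1⟩))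
      ((injOn_pickCount picker j).mono fun s hs => (hS s hs).1)
  rw [Nat.card_Icc] at hcard
  omega

theorem sum_pickCount (picker : Fin m → Fin n) : ∑ k, pickCount picker k m = m := by
  simpa [pickCount] using (card_eq_sum_card_fiberwise (f := picker) (s := univ) (t := univ)
    fun _ _ => mem_coe.2 (mem_univ _)).symm

theorem sum_runBundle {item : Fin m → Fin m} (hitem : Function.Injective item) (f : Fin m → ℝ) :
    ∑ g ∈ runBundle picker item j, f g = ∑ s with picker s = j, f (item s) :=
  sum_image hitem.injOn

end PickCount

section Run

variable {n m : ℕ} (u : Fin n → Fin m → ℝ) (picker : Fin m → Fin n) (item : Fin m → Fin m)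

/-- The rank of the item picked at step `s` in the preference list of the agent picking it. -/
noncomputable def pickRank (s : Fin m) : ℕ :=
  prefRank (u (picker s)) (item s)

/-- The ranks of the items that agent `k` picks before step `t`. -/
noncomputable def ranksBefore (t : Fin m) (k : Fin n) : Finset ℕ :=
  image (pickRank u picker item) {s | s < t ∧ picker s = k}

/-- A depth to which the preference list of agent `k` is exhausted at step `t`, if the agent picking
at step `t` misses her `L` best items. -/
noncomputable def reach (L : ℕ) (t : Fin m) (k : Fin n) : ℕ :=
  if k = picker t then L else (ranksBefore u picker item t k).sup (· + 1)

/-- Agent `k` loses an item within her reach to agent `k'`, who did not get it cheaply: it is not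
among the `4 * Q` best items of `k'`. -/
def LosesTo (Q L : ℕ) (t : Fin m) (k k' : Fin n) : Prop :=
  k ≠ k' ∧ ∃ s < t, picker s = k' ∧ 4 * Q ≤ pickRank u picker item s ∧
    prefRank (u k) (item s) < reach u picker item L t k

/-- The cluster of the agent picking at step `t`: all agents to which chains of losses lead from
her. -/
def InCluster (Q L : ℕ) (t : Fin m) (k : Fin n) : Prop :=
  Relation.ReflTransGen (LosesTo u picker item Q L t) (picker t) k

open Classical in
/-- The record of agent `k` in the cluster of the agent picking at step `t`. -/
noncomputable def clusterRecord (Q L : ℕ) (t : Fin m) (k : Fin n) : PickRecord :=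
  if InCluster u picker item Q L t k then
    ⟨reach u picker item L t k, ranksBefore u picker item t k⟩
  else ⟨0, ∅⟩

variable {u picker item} {w : Fin n → ℝ} {Q L : ℕ} {s t : Fin m} {k : Fin n}

theorem card_ranksBefore_le : #(ranksBefore u picker item t k) ≤ pickCount picker k t :=
  card_image_le

theorem pickRank_mem_ranksBefore (hs : s < t) :
    pickRank u picker item s ∈ ranksBefore u picker item t (picker s) :=
  mem_image_of_mem _ (by simpa using hs)

theorem lt_reach_of_mem_ranksBefore (hbefore : ∀ s < t, pickRank u picker item s < L) {p : ℕ}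
    (hp : p ∈ ranksBefore u picker item t k) : p < reach u picker item L t k := by
  unfold reach
  split_ifs
  · obtain ⟨s, hs, rfl⟩ := mem_image.1 hp
    exact hbefore s (mem_filter.1 hs).2.1
  · exact Nat.lt_of_succ_le (le_sup (f := (· + 1)) hp)

theorem reach_le_of_ne (hk : k ≠ picker t) : reach u picker item L t k ≤ m := by
  rw [reach, if_neg hk]
  refine Finset.sup_le fun p hp => ?_
  obtain ⟨s, -, rfl⟩ := mem_image.1 hp
  exact (prefRank_lt_card _ _).trans_eq (Fintype.card_fin m)

theorem clusterRecord_of_inCluster (hk : InCluster u picker item Q L t k) :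
    clusterRecord u picker item Q L t k =
      ⟨reach u picker item L t k, ranksBefore u picker item t k⟩ :=
  if_pos hk

theorem clusterRecord_of_not_inCluster (hk : ¬InCluster u picker item Q L t k) :
    clusterRecord u picker item Q L t k = ⟨0, ∅⟩ :=
  if_neg hk

theorem mk_mem_lostSlots_clusterRecord {p : ℕ} :
    ⟨k, p⟩ ∈ lostSlots (clusterRecord u picker item Q L t) ↔ InCluster u picker item Q L t k ∧
      p < reach u picker item L t k ∧ p ∉ ranksBefore u picker item t k := by
  by_cases hk : InCluster u picker item Q L t k
  · simp [lostSlots, PickRecord.lost, clusterRecord_of_inCluster, hk]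
  · simp [lostSlots, PickRecord.lost, clusterRecord_of_not_inCluster, hk]

theorem pickRank_notMem_lostSlots (hs : s < t) :
    ⟨picker s, pickRank u picker item s⟩ ∉ lostSlots (clusterRecord u picker item Q L t) :=
  fun h => (mk_mem_lostSlots_clusterRecord.1 h).2.2 (pickRank_mem_ranksBefore hs)

theorem clusterRecord_mem_clusterRecords (hbefore : ∀ s < t, pickRank u picker item s < L)
    (hcount : ∀ k, pickCount picker k t ≤ Q) {X : Finset (Fin n)}
    (hX : ∀ k, k ∈ X ↔ k ≠ picker t ∧ InCluster u picker item Q L t k) (k : Fin n) :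
    clusterRecord u picker item Q L t k ∈ clusterRecords m Q L (picker t) X k := by
  have hranks : ranksBefore u picker item t k ⊆ range (reach u picker item L t k) ∧
      #(ranksBefore u picker item t k) ≤ Q :=
    ⟨fun p hp => mem_range.2 (lt_reach_of_mem_ranksBefore hbefore hp),
      card_ranksBefore_le.trans (hcount k)⟩
  unfold clusterRecords
  split_ifs with hroot hkX
  · rw [clusterRecord_of_inCluster (hroot ▸ .refl), mem_pickRecords]
    exact ⟨by simp [reach, hroot], hranks⟩
  · obtain ⟨hroot, hk⟩ := (hX k).1 hkX
    obtain h | ⟨_, -, -, s, hs, rfl, hsQ, -⟩ := hk.cases_tail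
    · exact absurd h hroot
    · rw [clusterRecord_of_inCluster hk, mem_pickRecords]
      exact ⟨⟨hsQ.trans (lt_reach_of_mem_ranksBefore hbefore (pickRank_mem_ranksBefore hs)).le,
        reach_le_of_ne hroot⟩, hranks⟩
  · rw [clusterRecord_of_not_inCluster fun hk => hkX ((hX k).2 ⟨hroot, hk⟩), mem_singleton]

theorem pickRank_mem_takerSlots (hs : s < t) (hk : InCluster u picker item Q L t k)
    (hne : k ≠ picker s) (hreach : prefRank (u k) (item s) < reach u picker item L t k) :
    ⟨picker s, pickRank u picker item s⟩ ∈
      takerSlots Q (clusterRecord u picker item Q L t) := by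
  simp only [takerSlots, mem_sigma, mem_univ, true_and, mem_union, mem_range]
  refine or_iff_not_imp_left.2 fun hQ => ?_
  rw [clusterRecord_of_inCluster (hk.tail ⟨hne, s, hs, rfl, not_lt.1 hQ, hreach⟩)]
  exact pickRank_mem_ranksBefore hs

namespace IsWPSRun

theorem exists_lt_of_lt_pickRank (h : IsWPSRun w u picker item)
    (hu : ∀ k, Function.Injective (u k)) {p : ℕ} (hp : p < pickRank u picker item t) :
    ∃ s < t, prefRank (u (picker t)) (item s) = p := by
  obtain ⟨a, rfl⟩ := exists_prefRank_eq (hu (picker t)) (hp.trans (prefRank_lt_card _ _))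
  by_contra! hne
  exact (h.best_item t a fun s hs hsa => hne s hs (hsa ▸ rfl)).not_gt
    (prefRank_lt_prefRank.1 hp)

theorem exists_lt_of_lt_reach (h : IsWPSRun w u picker item) (hu : ∀ k, Function.Injective (u k))
    (hrank : L ≤ pickRank u picker item t) {p : ℕ} (hp : p < reach u picker item L t k) :
    ∃ s < t, prefRank (u k) (item s) = p := by
  unfold reach at hp
  split_ifs at hp with hk
  · exact hk ▸ h.exists_lt_of_lt_pickRank hu (hp.trans_le hrank)
  · obtain ⟨_, hr, hpr⟩ := Finset.lt_sup_iff.1 hp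
    obtain ⟨s, hs, rfl⟩ := mem_image.1 hr
    obtain ⟨hst, rfl⟩ := (mem_filter.1 hs).2
    obtain rfl | hlt := (Nat.lt_succ_iff.1 hpr).eq_or_lt
    · exact ⟨s, hst, rfl⟩
    · obtain ⟨s', hs', hp'⟩ := h.exists_lt_of_lt_pickRank hu hlt
      exact ⟨s', hs'.trans hst, hp'⟩

theorem exists_taker (h : IsWPSRun w u picker item) (hu : ∀ k, Function.Injective (u k))
    (hrank : L ≤ pickRank u picker item t)
    (x : lostSlots (clusterRecord u picker item Q L t)) :
    ∃ s < t, x.1.1 ≠ picker s ∧ prefRank (u x.1.1) (item s) = x.1.2 := by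
  obtain ⟨⟨k, p⟩, hx⟩ := x
  obtain ⟨-, hp, hown⟩ := mk_mem_lostSlots_clusterRecord.1 hx
  obtain ⟨s, hs, rfl⟩ := h.exists_lt_of_lt_reach hu hrank hp
  exact ⟨s, hs, fun hk => hown (by subst hk; exact pickRank_mem_ranksBefore hs), rfl⟩

theorem prefRank_notMem_ranksBefore (h : IsWPSRun w u picker item)
    (hu : ∀ k, Function.Injective (u k)) (hk : k ≠ picker s) :
    prefRank (u k) (item s) ∉ ranksBefore u picker item t k := fun hmem => by
  obtain ⟨s', hs', heq⟩ := mem_image.1 hmem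
  obtain ⟨-, rfl⟩ := (mem_filter.1 hs').2
  exact hk (congrArg picker (h.item_inj (prefRank_injective (hu _) heq)))

theorem mem_blockedEvent_of_forall_lt (h : IsWPSRun w u picker item)
    (hu : ∀ k, Function.Injective (u k)) (hcount : ∀ k, pickCount picker k t ≤ Q)
    (hrank : L ≤ pickRank u picker item t) (hbefore : ∀ s < t, pickRank u picker item s < L) :
    u ∈ blockedEvent (Fin m) Q L (picker t) := by
  classical
  let X : Finset (Fin n) := {k | k ≠ picker t ∧ InCluster u picker item Q L t k}
  have hX (k : Fin n) : k ∈ X ↔ k ≠ picker t ∧ InCluster u picker item Q L t k := by simp [X]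
  choose taker htaker_lt htaker_ne htaker using h.exists_taker (Q := Q) hu hrank
  refine Set.mem_biUnion (x := X)
    (mem_coe.2 (mem_powerset.2 fun k hk => mem_erase.2 ⟨((hX k).1 hk).1, mem_univ k⟩)) ?_
  refine Set.mem_biUnion (x := clusterRecord u picker item Q L t)
    (Fintype.mem_piFinset.2 ?_) ?_
  · simpa using clusterRecord_mem_clusterRecords hbefore hcount hX
  refine Set.mem_biUnion
    (x := fun x => ⟨picker (taker x), pickRank u picker item (taker x)⟩) ?_
    ⟨hu, fun x => ⟨item (taker x), htaker x, rfl⟩⟩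
  refine mem_filter.2 ⟨Fintype.mem_piFinset.2 fun x => mem_sdiff.2
    ⟨?_, pickRank_notMem_lostSlots (htaker_lt x)⟩, fun ⟨k, hkX⟩ => ?_⟩
  · obtain ⟨hk, hreach, -⟩ := mk_mem_lostSlots_clusterRecord.1 x.2
    exact pickRank_mem_takerSlots (htaker_lt x) hk (htaker_ne x) ((htaker x).trans_lt hreach)
  · obtain ⟨hroot, hk⟩ := (hX k).1 hkX
    obtain hkt | ⟨k', hk', hne, s, hs, hsk, -, hreach⟩ := hk.cases_tail
    · exact absurd hkt hroot
    subst hsk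
    let x : lostSlots (clusterRecord u picker item Q L t) :=
      ⟨⟨k', prefRank (u k') (item s)⟩, mk_mem_lostSlots_clusterRecord.2
        ⟨hk', hreach, h.prefRank_notMem_ranksBefore hu hne⟩⟩
    have hxs : taker x = s := h.item_inj (prefRank_injective (hu k') (htaker x))
    refine ⟨x, mem_map.2 ⟨pickRank u picker item s, ?_, by simp [hxs]⟩⟩
    rw [clusterRecord_of_inCluster hk]
    exact pickRank_mem_ranksBefore hs

theorem exists_mem_blockedEvent (h : IsWPSRun w u picker item)
    (hu : ∀ k, Function.Injective (u k)) (hcount : ∀ k, pickCount picker k t ≤ Q)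
    (hrank : L ≤ pickRank u picker item t) : ∃ j, u ∈ blockedEvent (Fin m) Q L j := by
  obtain ⟨t₀, ht₀, hfirst⟩ := wellFounded_lt.has_min
    {t : Fin m | L ≤ pickRank u picker item t} ⟨t, hrank⟩
  have hle : t₀ ≤ t := not_lt.1 (hfirst t hrank)
  exact ⟨picker t₀, h.mem_blockedEvent_of_forall_lt hu
    (fun k => (pickCount_mono picker k hle).trans (hcount k)) ht₀
    fun s hs => not_le.1 fun hs' => hfirst s hs' hs⟩

end IsWPSRun

end Run

section LayerCake

theorem sum_eq_integral_card_filter_lt {ι : Type*} (S : Finset ι) {f : ι → ℝ}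
    (hf : ∀ s, f s ∈ Set.Icc 0 1) :
    ∑ s ∈ S, f s = ∫ c in (0 : ℝ)..1, (#{s ∈ S | c < f s} : ℝ) := by
  have hanti (s : ι) : Antitone fun c : ℝ => if c < f s then (1 : ℝ) else 0 := fun c d hcd => by
    dsimp only
    split_ifs with hd hc
    exacts [le_rfl, absurd (hcd.trans_lt hd) hc, zero_le_one, le_rfl]
  have hone (s : ι) : ∫ c in (0 : ℝ)..1, (if c < f s then (1 : ℝ) else 0) = f s := by
    rw [← intervalIntegral.integral_add_adjacent_intervals (b := f s)
        (hanti s).intervalIntegrable (hanti s).intervalIntegrable,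
      intervalIntegral.integral_congr_Ioo_of_le (g := fun _ => (1 : ℝ)) (hf s).1
        fun c hc => if_pos hc.2,
      intervalIntegral.integral_congr_Ioo_of_le (g := fun _ => (0 : ℝ)) (hf s).2
        fun c hc => if_neg hc.1.not_gt]
    simp
  simp only [card_filter, Nat.cast_sum, Nat.cast_ite, Nat.cast_one, Nat.cast_zero]
  rw [intervalIntegral.integral_finsetSum fun s _ => (hanti s).intervalIntegrable]
  exact sum_congr rfl fun s _ => (hone s).symm

theorem add_mul_le_integral {f : ℝ → ℝ} (hf : IntervalIntegrable f volume 0 1) {a b x y : ℝ}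
    (hx : 0 ≤ x) (hxy : x ≤ y) (hy : y ≤ 1) (ha : ∀ c, a ≤ f c)
    (hb : ∀ c ∈ Set.Ico x y, a + b ≤ f c) : a + b * (y - x) ≤ ∫ c in (0 : ℝ)..1, f c := by
  have hint {p q : ℝ} (hp : 0 ≤ p) (hpq : p ≤ q) (hq : q ≤ 1) : IntervalIntegrable f volume p q :=
    hf.mono_set (by
      rw [Set.uIcc_of_le hpq, Set.uIcc_of_le zero_le_one]; exact Set.Icc_subset_Icc hp hq)
  have hlower {p q e : ℝ} (hp : 0 ≤ p) (hpq : p ≤ q) (hq : q ≤ 1)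
      (he : ∀ c ∈ Set.Ioo p q, e ≤ f c) : e * (q - p) ≤ ∫ c in p..q, f c := by
    simpa [mul_comm] using intervalIntegral.integral_mono_on_of_le_Ioo hpq
      intervalIntegrable_const (hint hp hpq hq) he
  have h0x := hlower le_rfl hx (hxy.trans hy) fun c _ => ha c
  have hxy' := hlower hx hxy hy fun c hc => hb c ⟨hc.1.le, hc.2⟩
  have hy1 := hlower (hx.trans hxy) hy le_rfl fun c _ => ha c
  rw [← intervalIntegral.integral_add_adjacent_intervals (hint le_rfl (hx.trans hxy) hy)
      (hint (hx.trans hxy) hy le_rfl),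
    ← intervalIntegral.integral_add_adjacent_intervals (hint le_rfl hx (hxy.trans hy))
      (hint hx hxy hy)]
  linarith

end LayerCake

namespace IsWPSRun

variable {n m : ℕ} {u : Fin n → Fin m → ℝ} {picker : Fin m → Fin n} {item : Fin m → Fin m}
  {w : Fin n → ℝ} {i j : Fin n} {s t : Fin m} {c : ℝ}

theorem pickCount_sub_one_div_le (h : IsWPSRun w u picker item) (hw : ∀ k, 0 < w k) (k l : Fin n)
    (t : ℕ) : ((pickCount picker k t : ℝ) - 1) / w k ≤ pickCount picker l t / w l := by
  obtain h0 | hpos := (pickCount picker k t).eq_zero_or_pos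
  · exact (div_nonpos_of_nonpos_of_nonneg (by simp [h0]) (hw k).le).trans
      (div_nonneg (Nat.cast_nonneg _) (hw l).le)
  obtain ⟨s, hst, rfl, hs⟩ := exists_pickCount_eq (Nat.sub_one_lt_of_lt hpos)
  calc ((pickCount picker (picker s) t : ℝ) - 1) / w (picker s)
      = pickCount picker (picker s) s / w (picker s) := by
        rw [hs, Nat.cast_sub hpos, Nat.cast_one]
    _ ≤ pickCount picker l s / w l := h.min_ratio s l
    _ ≤ pickCount picker l t / w l := by
        have := hw l
        gcongr
        exact pickCount_mono picker l hst.le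

theorem utility_le_of_lt (h : IsWPSRun w u picker item) (hst : s < t) :
    u (picker s) (item t) ≤ u (picker s) (item s) :=
  h.best_item s (item t) fun _ hs heq => (hs.trans hst).ne (congrArg Fin.val (h.item_inj heq))

theorem pickCount_div_le_card_div (h : IsWPSRun w u picker item) (hw : 0 < w i)
    (hc : ∀ s < t, picker s = i → c < u i (item s)) :
    (pickCount picker (picker t) t : ℝ) / w (picker t) ≤
      #{s | picker s = i ∧ c < u i (item s)} / w i := by
  refine (h.min_ratio t i).trans ?_
  gcongr
  exact card_le_card fun s hs => by
    obtain ⟨hst, hsi⟩ := (mem_filter.1 hs).2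
    exact mem_filter.2 ⟨mem_univ s, hsi, hc s hst hsi⟩

theorem pickCount_div_le_card_div_of_lt (h : IsWPSRun w u picker item) (hw : 0 < w i)
    (hc : c < u i (item t)) :
    (pickCount picker (picker t) t : ℝ) / w (picker t) ≤
      #{s | picker s = i ∧ c < u i (item s)} / w i :=
  h.pickCount_div_le_card_div hw fun _ hst hs => hc.trans_le (hs ▸ h.utility_le_of_lt hst)

theorem card_sub_one_div_le_card_div (h : IsWPSRun w u picker item) (hw : ∀ k, 0 < w k)
    (i j : Fin n) (c : ℝ) :
    ((#{s | picker s = j ∧ c < u i (item s)} : ℝ) - 1) / w j ≤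
      #{s | picker s = i ∧ c < u i (item s)} / w i := by
  set S : Finset (Fin m) := {s | picker s = j ∧ c < u i (item s)} with hS
  have hmem {s : Fin m} : s ∈ S ↔ picker s = j ∧ c < u i (item s) := by simp [hS]
  obtain hempty | hne := S.eq_empty_or_nonempty
  · exact (div_nonpos_of_nonpos_of_nonneg (by simp [hempty]) (hw j).le).trans
      (div_nonneg (Nat.cast_nonneg _) (hw i).le)
  obtain ⟨htj, htc⟩ := hmem.1 (S.max'_mem hne)
  have hcard : #S ≤ pickCount picker j (S.max' hne) + 1 :=
    card_add_le_pickCount_add_one (Nat.zero_le _) fun s hs =>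
      ⟨(hmem.1 hs).1, S.le_max' s hs, Nat.zero_le _⟩
  calc ((#S : ℝ) - 1) / w j ≤ pickCount picker j (S.max' hne) / w j := by
        have := hw j
        gcongr
        exact sub_le_iff_le_add.2 (mod_cast hcard)
    _ ≤ _ := htj ▸ h.pickCount_div_le_card_div_of_lt (hw i) htc

theorem card_add_sub_div_le_card_div (h : IsWPSRun w u picker item) (hw : ∀ k, 0 < w k)
    {R b : ℕ} (hR : 0 < R) (hcount : R ≤ pickCount picker j m)
    (hfew : #{s | (picker s = j ∧ c < u i (item s)) ∧ pickCount picker j s < R} < b)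
    (hearly : ∀ t, picker t = j → pickCount picker j t < R →
      ∀ s < t, picker s = i → c < u i (item s)) :
    ((#{s | picker s = j ∧ c < u i (item s)} : ℝ) + (R - b)) / w j ≤
      #{s | picker s = i ∧ c < u i (item s)} / w i := by
  have hwj := hw j
  set S : Finset (Fin m) := {s | picker s = j ∧ c < u i (item s)} with hS
  set late : Finset (Fin m) := {s ∈ S | ¬pickCount picker j s < R} with hlate
  have hmem {s : Fin m} : s ∈ late ↔ (picker s = j ∧ c < u i (item s)) ∧
      R ≤ pickCount picker j s := by simp [hlate, hS]
  have hsplit := S.card_filter_add_card_filter_not fun s => pickCount picker j s < R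
  rw [hS, filter_filter, ← hS, ← hlate] at hsplit
  suffices ∃ r : ℕ, #late + R ≤ r + 1 ∧
      (r : ℝ) / w j ≤ #{s | picker s = i ∧ c < u i (item s)} / w i by
    obtain ⟨r, hr, hle⟩ := this
    refine le_trans ?_ hle
    have hcard : #S + R ≤ r + b := by omega
    gcongr
    rw [← add_sub_assoc]
    exact sub_le_iff_le_add.2 (mod_cast hcard)
  obtain hempty | hne := late.eq_empty_or_nonempty
  · obtain ⟨t, -, rfl, htR⟩ := exists_pickCount_eq ((Nat.sub_one_lt_of_lt hR).trans_le hcount)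
    exact ⟨R - 1, by rw [hempty, card_empty]; omega, htR ▸ h.pickCount_div_le_card_div (hw i)
      (hearly t rfl (htR.trans_lt (Nat.sub_one_lt_of_lt hR)))⟩
  · obtain ⟨⟨htj, htc⟩, htR⟩ := hmem.1 (late.max'_mem hne)
    exact ⟨pickCount picker j (late.max' hne),
      card_add_le_pickCount_add_one htR fun s hs =>
        ⟨(hmem.1 hs).1.1, late.le_max' s hs, (hmem.1 hs).2⟩,
      htj ▸ h.pickCount_div_le_card_div_of_lt (hw i) htc⟩

theorem sum_div_le_sum_div (h : IsWPSRun w u picker item) (hw : ∀ k, 0 < w k)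
    (hu : ∀ g, u i g ∈ Set.Icc 0 1) {R b : ℕ} {δ : ℝ} (hδ : δ ∈ Set.Icc 0 1)
    (hRb : 1 ≤ ((R : ℝ) - b) * (δ / 2)) (hR : 0 < R) (hcount : R ≤ pickCount picker j m)
    (hfew : #{s | (picker s = j ∧ 1 - δ < u i (item s)) ∧ pickCount picker j s < R} < b)
    (hearly : ∀ t, picker t = j → pickCount picker j t < R →
      ∀ s < t, picker s = i → 1 - δ / 2 ≤ u i (item s)) :
    (∑ s with picker s = j, u i (item s)) / w j ≤ (∑ s with picker s = i, u i (item s)) / w i := by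
  obtain ⟨hδ0, hδ1⟩ := hδ
  let count (k : Fin n) (c : ℝ) : ℝ := #{s | picker s = k ∧ c < u i (item s)}
  have hsum (k : Fin n) : ∑ s with picker s = k, u i (item s) = ∫ c in (0 : ℝ)..1, count k c := by
    simpa only [filter_filter] using
      sum_eq_integral_card_filter_lt {s | picker s = k} fun s => hu (item s)
  have hint (k : Fin n) : IntervalIntegrable (count k) volume 0 1 :=
    Antitone.intervalIntegrable fun c d hcd => Nat.cast_le.2 <| card_le_card <|
      monotone_filter_right _ fun s _ hs => ⟨hs.1, hcd.trans_lt hs.2⟩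
  have hall (c : ℝ) : -1 / w j ≤ count i c / w i - count j c / w j := by
    have hle := h.card_sub_one_div_le_card_div hw i j c
    rw [sub_div] at hle
    rw [neg_div]
    linarith
  have hmiddle (c : ℝ) (hc : c ∈ Set.Ico (1 - δ) (1 - δ / 2)) :
      -1 / w j + (R - b + 1) / w j ≤ count i c / w i - count j c / w j := by
    have hle := h.card_add_sub_div_le_card_div (c := c) hw hR hcount
      ((card_le_card (monotone_filter_right _ fun s _ hs =>
        ⟨⟨hs.1.1, hc.1.trans_lt hs.1.2⟩, hs.2⟩)).trans_lt hfew)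
      fun t ht htR s hst hs => hc.2.trans_le (hearly t ht htR s hst hs)
    rw [add_div] at hle
    rw [← add_div, neg_add_cancel_comm_assoc]
    linarith
  have key := add_mul_le_integral (((hint i).div_const _).sub ((hint j).div_const _))
    (sub_nonneg.2 hδ1) (by linarith) (by linarith) hall hmiddle
  rw [intervalIntegral.integral_sub ((hint i).div_const _) ((hint j).div_const _),
    intervalIntegral.integral_div, intervalIntegral.integral_div, ← hsum, ← hsum] at key
  have hgain : 0 ≤ -1 / w j + (R - b + 1) / w j * (1 - δ / 2 - (1 - δ)) := by
    rw [div_mul_eq_mul_div, ← add_div]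
    exact div_nonneg (by linarith) (hw j).le
  linarith

theorem pickCount_le_of_lt (h : IsWPSRun w u picker item) (hw : ∀ k, 0 < w k) {C : ℝ}
    (hC : ∀ k l, w k ≤ C * w l) {R Q t : ℕ} (hQ : C * (R - 1) < Q) (ht : pickCount picker j t < R)
    (k : Fin n) : pickCount picker k t ≤ Q := by
  have hR : (pickCount picker j t : ℝ) ≤ R - 1 := le_sub_iff_add_le.2 (mod_cast ht)
  have hbalance := h.pickCount_sub_one_div_le hw k j t
  rw [div_le_div_iff₀ (hw k) (hw j)] at hbalance
  have hscaled : ((pickCount picker k t : ℝ) - 1) * w j ≤ C * (R - 1) * w j :=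
    calc ((pickCount picker k t : ℝ) - 1) * w j ≤ pickCount picker j t * w k := hbalance
      _ ≤ (R - 1) * (C * w j) := by
        gcongr
        exacts [(hw k).le, (Nat.cast_nonneg _).trans hR, hC k j]
      _ = C * (R - 1) * w j := by ring
  have hlt : (pickCount picker k t : ℝ) < Q + 1 := by
    linarith [le_of_mul_le_mul_right hscaled (hw j)]
  exact Nat.lt_succ_iff.1 (mod_cast hlt)

theorem isWEF (h : IsWPSRun w u picker item) (hw : ∀ k, 0 < w k) {C : ℝ}
    (hC : ∀ k l, w k ≤ C * w l) (hu : ∀ k g, u k g ∈ Set.Icc 0 1) {R b Q L : ℕ} {δ : ℝ}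
    (hδ : δ ∈ Set.Icc 0 1) (hRb : 1 ≤ ((R : ℝ) - b) * (δ / 2)) (hR : 0 < R)
    (hQ : C * (R - 1) < Q) (hm : n * Q < m)
    (hrank : ∀ t : Fin m, (∀ k, pickCount picker k t ≤ Q) → pickRank u picker item t < L)
    (htop : ∀ k g, prefRank (u k) g < L → 1 - δ / 2 ≤ u k g)
    (hfew : ∀ i j, i ≠ j → #{g | prefRank (u j) g < L ∧ 1 - δ < u i g} < b) :
    IsWEF w u (runBundle picker item) := fun i j => by
  obtain rfl | hij := eq_or_ne i j
  · exact le_rfl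
  have hearly {s t : Fin m} (ht : pickCount picker j t < R) (hst : s ≤ t) :
      pickRank u picker item s < L :=
    hrank s fun k => (pickCount_mono picker k hst).trans (h.pickCount_le_of_lt hw hC hQ ht k)
  have hcount : R ≤ pickCount picker j m := by
    by_contra! hlt
    have hle : ∑ k, pickCount picker k m ≤ ∑ _k : Fin n, Q :=
      sum_le_sum fun k _ => h.pickCount_le_of_lt hw hC hQ hlt k
    rw [sum_pickCount, sum_const, card_univ, Fintype.card_fin, smul_eq_mul] at hle
    exact hle.not_gt hm
  rw [sum_runBundle h.item_inj, sum_runBundle h.item_inj]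
  refine h.sum_div_le_sum_div hw (hu i) hδ hRb hR hcount ?_ fun t _ htR s hst hs =>
    htop i _ (hs ▸ hearly htR hst.le)
  refine (card_le_card_of_injOn item (fun s hs => ?_) h.item_inj.injOn).trans_lt (hfew i j hij)
  obtain ⟨⟨rfl, hval⟩, hsR⟩ := (mem_filter.1 hs).2
  exact mem_coe.2 (mem_filter.2 ⟨mem_univ _, hearly hsR le_rfl, hval⟩)

end IsWPSRun

section ValueEvents

theorem measureReal_pi_finset_pi {ι γ : Type*} [Fintype ι] [MeasurableSpace γ] (D : Measure γ)
    [IsProbabilityMeasure D] (G : Finset ι) (A : Set γ) :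
    (Measure.pi fun _ : ι => D).real ((G : Set ι).pi fun _ => A) = D.real A ^ #G := by
  rw [measureReal_def, Measure.pi_pi_finset, prod_const, ENNReal.toReal_pow, measureReal_def]

variable {κ ι : Type*} [Fintype κ] [Fintype ι] (D : Measure ℝ) [IsProbabilityMeasure D]

theorem measureReal_exists_prefRank_lt_le (L : ℕ) (c : ℝ) :
    (Measure.pi fun _ : ι => D).real {x | ∃ a, prefRank x a < L ∧ x a < c} ≤
      L * D.real (Set.Iio c) ^ (Fintype.card ι / L) := by
  classical
  obtain hcard | hL := lt_or_ge (Fintype.card ι) L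
  · rw [Nat.div_eq_of_lt hcard, pow_zero, mul_one]
    exact measureReal_le_one.trans (Nat.one_le_cast.2 (Nat.one_le_of_lt hcard))
  obtain rfl | hL0 := eq_or_ne L 0
  · simp
  obtain ⟨P, hP, hPcard⟩ := Finpartition.exists_equipartition_card_eq (univ : Finset ι) hL0 hL
  have hsub : {x : ι → ℝ | ∃ a, prefRank x a < L ∧ x a < c} ⊆
      ⋃ G ∈ P.parts, (G : Set ι).pi fun _ => Set.Iio c := by
    rintro x ⟨a, ha, hac⟩
    by_contra hcon
    simp only [Set.mem_iUnion, Set.mem_pi, mem_coe, Set.mem_Iio] at hcon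
    push Not at hcon
    have : Nonempty ι := ⟨a⟩
    choose! b hb hbc using hcon
    refine ha.not_ge (hPcard ▸ card_le_card_of_injOn b
      (fun G hG => mem_coe.2 (mem_filter.2 ⟨mem_univ _, hac.trans_le (hbc G hG)⟩))
      fun G hG G' hG' h => ?_)
    exact P.disjoint.elim_finset hG hG' _ (hb G hG) (h ▸ hb G' hG')
  calc (Measure.pi fun _ : ι => D).real _ ≤ (Measure.pi fun _ : ι => D).real _ :=
        measureReal_mono hsub (measure_ne_top _ _)
    _ ≤ ∑ G ∈ P.parts, (Measure.pi fun _ : ι => D).real ((G : Set ι).pi fun _ => Set.Iio c) :=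
        measureReal_biUnion_finset_le _ _
    _ ≤ ∑ _G ∈ P.parts, D.real (Set.Iio c) ^ (Fintype.card ι / L) := by
        refine sum_le_sum fun _ hG => ?_
        rw [measureReal_pi_finset_pi]
        exact pow_le_pow_of_le_one measureReal_nonneg measureReal_le_one
          (by simpa [hPcard] using hP.average_le_card_part hG)
    _ = L * D.real (Set.Iio c) ^ (Fintype.card ι / L) := by
        rw [sum_const, hPcard, nsmul_eq_mul]

theorem measureReal_le_card_filter_lt_le (T : Finset ι) (b : ℕ) (c : ℝ) :
    (Measure.pi fun _ : ι => D).real {x | b ≤ #{a ∈ T | c < x a}} ≤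
      2 ^ #T * D.real (Set.Ioi c) ^ b := by
  have hsub : {x : ι → ℝ | b ≤ #{a ∈ T | c < x a}} ⊆
      ⋃ G ∈ T.powersetCard b, (G : Set ι).pi fun _ => Set.Ioi c := fun x hx => by
    obtain ⟨G, hG, hGb⟩ := exists_subset_card_eq hx
    exact Set.mem_biUnion (mem_powersetCard.2 ⟨hG.trans (filter_subset _ _), hGb⟩)
      fun a ha => (mem_filter.1 (hG ha)).2
  calc (Measure.pi fun _ : ι => D).real _ ≤ (Measure.pi fun _ : ι => D).real _ :=
        measureReal_mono hsub (measure_ne_top _ _)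
    _ ≤ ∑ G ∈ T.powersetCard b, (Measure.pi fun _ : ι => D).real
          ((G : Set ι).pi fun _ => Set.Ioi c) := measureReal_biUnion_finset_le _ _
    _ = ∑ _G ∈ T.powersetCard b, D.real (Set.Ioi c) ^ b := sum_congr rfl fun _ hG => by
        rw [measureReal_pi_finset_pi, (mem_powersetCard.1 hG).2]
    _ = (#T).choose b * D.real (Set.Ioi c) ^ b := by
        rw [sum_const, card_powersetCard, nsmul_eq_mul]
    _ ≤ 2 ^ #T * D.real (Set.Ioi c) ^ b := by
        gcongr
        exact_mod_cast Nat.choose_le_two_pow _ _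

theorem measureReal_pi_mem_and_mem {γ : Type*} [MeasurableSpace γ] (μ : Measure γ)
    [IsProbabilityMeasure μ] {i j : κ} (hij : i ≠ j) (A B : Set γ) :
    (Measure.pi fun _ : κ => μ).real {u | u i ∈ A ∧ u j ∈ B} = μ.real A * μ.real B := by
  classical
  have hset : {u : κ → γ | u i ∈ A ∧ u j ∈ B} =
      (({i, j} : Finset κ) : Set κ).pi fun k => if k = i then A else B := by
    ext u
    simp [hij.symm]
  rw [hset, measureReal_def, Measure.pi_pi_finset, prod_pair hij, if_pos rfl, if_neg hij.symm,
    ENNReal.toReal_mul, measureReal_def, measureReal_def]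

theorem measureReal_le_card_filter_prefRank_lt_le {i j : κ} (hij : i ≠ j) (L b : ℕ) (c : ℝ) :
    (Measure.pi fun _ : κ => Measure.pi fun _ : ι => D).real
        {u | Function.Injective (u j) ∧ b ≤ #{a | prefRank (u j) a < L ∧ c < u i a}} ≤
      2 ^ L * D.real (Set.Ioi c) ^ b := by
  classical
  let top (T : Finset ι) : Set (ι → ℝ) :=
    {x | Function.Injective x ∧ ∀ a, prefRank x a < L ↔ a ∈ T}
  have hsub : {u : κ → ι → ℝ | Function.Injective (u j) ∧
      b ≤ #{a | prefRank (u j) a < L ∧ c < u i a}} ⊆ ⋃ T ∈ ({T | #T ≤ L} : Finset (Finset ι)),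
        {u | u j ∈ top T ∧ u i ∈ {x | b ≤ #{a ∈ T | c < x a}}} := fun u ⟨hinj, hb⟩ =>
    Set.mem_biUnion (x := ({a | prefRank (u j) a < L} : Finset ι))
      (by simpa using card_filter_prefRank_lt_le hinj L)
      ⟨⟨hinj, by simp⟩, by simpa only [Set.mem_ofPred_eq, filter_filter] using hb⟩
  have hmeas (T : Finset ι) : MeasurableSet (top T) := by
    have htop : top T = {x | Function.Injective x} ∩
        ⋂ a, (fun x => prefRank x a) ⁻¹' {p | p < L ↔ a ∈ T} := by
      ext x
      simp [top]
    exact htop ▸ measurableSet_injective.inter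
      (MeasurableSet.iInter fun a => measurable_prefRank a MeasurableSet.of_discrete)
  have hdisj : Pairwise (Function.onFun Disjoint top) := fun T T' hne =>
    Set.disjoint_left.2 fun x hx hx' => hne (ext fun a => (hx.2 a).symm.trans (hx'.2 a))
  calc (Measure.pi fun _ : κ => Measure.pi fun _ : ι => D).real _
      ≤ (Measure.pi fun _ : κ => Measure.pi fun _ : ι => D).real _ :=
        measureReal_mono hsub (measure_ne_top _ _)
    _ ≤ ∑ T : Finset ι with #T ≤ L, (Measure.pi fun _ : κ => Measure.pi fun _ : ι => D).real _ :=
        measureReal_biUnion_finset_le _ _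
    _ ≤ ∑ T : Finset ι with #T ≤ L, (Measure.pi fun _ : ι => D).real (top T) *
          (2 ^ L * D.real (Set.Ioi c) ^ b) := by
        refine sum_le_sum fun T hT => ?_
        rw [measureReal_pi_mem_and_mem _ hij.symm]
        refine mul_le_mul_of_nonneg_left
          ((measureReal_le_card_filter_lt_le D T b c).trans ?_) measureReal_nonneg
        gcongr
        exacts [one_le_two, (mem_filter.1 hT).2]
    _ ≤ 1 * (2 ^ L * D.real (Set.Ioi c) ^ b) := by
        rw [← sum_mul]
        gcongr
        exact (sum_measureReal_le_measureReal_univ (fun T _ => hmeas T)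
          (hdisj.set_pairwise _)).trans_eq probReal_univ
    _ = 2 ^ L * D.real (Set.Ioi c) ^ b := one_mul _

end ValueEvents

section AlmostEverywhere

variable {ι : Type*} [Fintype ι] {γ : Type*} [MeasurableSpace γ]

theorem ae_pi_forall {μ : Measure γ} [IsProbabilityMeasure μ]
    {p : γ → Prop} (hp : ∀ᵐ x ∂μ, p x) : ∀ᵐ x ∂Measure.pi fun _ : ι => μ, ∀ a, p (x a) :=
  Filter.eventually_all.2 fun a =>
    (Measure.tendsto_eval_ae_ae (μ := fun _ : ι => μ) (i := a)).eventually hp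

theorem ae_pi_injective [MeasurableEq γ] (D : Measure γ)
    [IsProbabilityMeasure D] [NullSingletonClass D] :
    ∀ᵐ x ∂Measure.pi fun _ : ι => D, Function.Injective x := by
  have hne (a b : ι) (hab : a ≠ b) : ∀ᵐ x ∂Measure.pi fun _ : ι => D, x a ≠ x b := by
    have hdiag : MeasurableSet {p : γ × γ | p.1 = p.2} :=
      measurableSet_eq_fun measurable_fst measurable_snd
    have hpair : (Measure.pi fun _ : ι => D).map (fun x => (x a, x b)) = D.prod D := by
      have hindep := ((ProbabilityTheory.iIndepFun_pi (μ := fun _ : ι => D)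
        (X := fun _ x => x) fun _ => aemeasurable_id).indepFun hab)
      rw [(ProbabilityTheory.indepFun_iff_map_prod_eq_prod_map_map
          (measurable_pi_apply a).aemeasurable (measurable_pi_apply b).aemeasurable).1 hindep,
        (measurePreserving_eval (fun _ : ι => D) a).map_eq,
        (measurePreserving_eval (fun _ : ι => D) b).map_eq]
    have hnull : D.prod D {p | p.1 = p.2} = 0 := by
      refine (Measure.measure_prod_null hdiag).2 (Filter.Eventually.of_forall fun x => ?_)
      have : Prod.mk x ⁻¹' {p : γ × γ | p.1 = p.2} = {x} := by
        ext y
        simp [eq_comm]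
      simp [this]
    rw [← hpair, Measure.map_apply
      ((measurable_pi_apply a).prodMk (measurable_pi_apply b)) hdiag] at hnull
    exact compl_mem_ae_iff.2 hnull
  filter_upwards [Filter.eventually_all.2 fun a => Filter.eventually_all.2 fun b =>
    Filter.eventually_all.2 (hne a b)] with x hx a b
  exact not_imp_not.1 (hx a b)

end AlmostEverywhere

section LinearTail

variable {α β : ℝ} {D : Measure ℝ}

/-- `LinearUpperTail α β D` says that `D` is a diffuse measure on `[0, 1]` whose mass within
distance `δ` of the endpoint `1` lies between `α * δ` and `β * δ`. It extends `PDFBounded` to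
distributions with any behaviour away from `1`. -/
structure LinearUpperTail (α β : ℝ) (D : Measure ℝ) : Prop where
  nullSingletonClass : NullSingletonClass D
  ae_mem_Icc : ∀ᵐ x ∂D, x ∈ Set.Icc (0 : ℝ) 1
  measureReal_Iio_le : ∀ δ ∈ Set.Icc (0 : ℝ) 1, D.real (Set.Iio (1 - δ)) ≤ 1 - α * δ
  measureReal_Ioi_le : ∀ δ ∈ Set.Icc (0 : ℝ) 1, D.real (Set.Ioi (1 - δ)) ≤ β * δ

theorem LinearUpperTail.lower_le_one (h : LinearUpperTail α β D) : α ≤ 1 := by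
  have := measureReal_nonneg.trans (h.measureReal_Iio_le 1 ⟨zero_le_one, le_rfl⟩)
  linarith

theorem LinearUpperTail.upper_nonneg (h : LinearUpperTail α β D) : 0 ≤ β := by
  simpa using measureReal_nonneg.trans (h.measureReal_Ioi_le 1 ⟨zero_le_one, le_rfl⟩)

theorem PDFBounded.apply_le (h : PDFBounded α β D) {s : Set ℝ} (hs : MeasurableSet s) :
    D s ≤ ENNReal.ofReal β * volume (s ∩ Set.Icc 0 1) := by
  obtain ⟨f, rfl, hf⟩ := h
  rw [withDensity_apply f hs, Measure.restrict_restrict hs, ← setLIntegral_const]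
  exact setLIntegral_mono' (hs.inter measurableSet_Icc) fun x hx => (hf x hx.2).2

theorem PDFBounded.le_apply (h : PDFBounded α β D) {s : Set ℝ} (hs : MeasurableSet s) :
    ENNReal.ofReal α * volume (s ∩ Set.Icc 0 1) ≤ D s := by
  obtain ⟨f, rfl, hf⟩ := h
  rw [withDensity_apply f hs, Measure.restrict_restrict hs, ← setLIntegral_const]
  exact setLIntegral_mono' (hs.inter measurableSet_Icc) fun x hx => (hf x hx.2).1

theorem PDFBounded.le (h : PDFBounded α β D) (hβ : 0 ≤ β) : α ≤ β := by
  obtain ⟨f, -, hf⟩ := h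
  have hf0 := hf 0 ⟨le_rfl, zero_le_one⟩
  exact (ENNReal.ofReal_le_ofReal_iff hβ).1 (hf0.1.trans hf0.2)

theorem PDFBounded.measureReal_Ioi_le (h : PDFBounded α β D) (hβ : 0 ≤ β) {δ : ℝ} (hδ : 0 ≤ δ) :
    D.real (Set.Ioi (1 - δ)) ≤ β * δ := by
  refine ENNReal.toReal_le_of_le_ofReal (mul_nonneg hβ hδ) ?_
  calc D (Set.Ioi (1 - δ)) ≤ ENNReal.ofReal β * volume (Set.Ioi (1 - δ) ∩ Set.Icc 0 1) :=
        h.apply_le measurableSet_Ioi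
    _ ≤ ENNReal.ofReal β * volume (Set.Icc (1 - δ) 1) := by
        gcongr
        exact fun x hx => ⟨hx.1.le, hx.2.2⟩
    _ = ENNReal.ofReal (β * δ) := by
        rw [Real.volume_Icc, sub_sub_cancel, ENNReal.ofReal_mul hβ]

theorem PDFBounded.measureReal_Iio_le [IsProbabilityMeasure D] (h : PDFBounded α β D)
    (hα : 0 ≤ α) {δ : ℝ} (hδ : δ ≤ 1) : D.real (Set.Iio (1 - δ)) ≤ 1 - α * δ := by
  have hIci : ENNReal.ofReal (α * δ) ≤ D (Set.Ici (1 - δ)) :=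
    calc ENNReal.ofReal (α * δ) = ENNReal.ofReal α * volume (Set.Icc (1 - δ) 1) := by
          rw [Real.volume_Icc, sub_sub_cancel, ENNReal.ofReal_mul hα]
      _ ≤ ENNReal.ofReal α * volume (Set.Ici (1 - δ) ∩ Set.Icc 0 1) := by
          gcongr
          exact fun x hx => ⟨hx.1, (sub_nonneg.2 hδ).trans hx.1, hx.2⟩
      _ ≤ D (Set.Ici (1 - δ)) := h.le_apply measurableSet_Ici
  rw [← Set.compl_Ici, probReal_compl_eq_one_sub measurableSet_Ici]
  gcongr
  exact (ENNReal.ofReal_le_iff_le_toReal (measure_ne_top _ _)).1 hIci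

theorem PDFBounded.linearUpperTail [IsProbabilityMeasure D] (h : PDFBounded α β D) (hα : 0 ≤ α)
    (hβ : 0 ≤ β) : LinearUpperTail α β D where
  nullSingletonClass := ⟨fun x => by
    have hx : volume ({x} ∩ Set.Icc (0 : ℝ) 1) = 0 :=
      measure_mono_null Set.inter_subset_left Real.volume_singleton
    simpa [hx] using h.apply_le (measurableSet_singleton x)⟩
  ae_mem_Icc := by
    have hout := h.apply_le (measurableSet_Icc (a := (0 : ℝ)) (b := 1)).compl
    rw [Set.compl_inter_self, measure_empty, mul_zero] at hout
    exact nonpos_iff_eq_zero.1 hout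
  measureReal_Iio_le _ hδ := h.measureReal_Iio_le hα hδ.2
  measureReal_Ioi_le _ hδ := h.measureReal_Ioi_le hβ hδ.1

end LinearTail

section FailureProbability

theorem one_sub_measureReal_le_of_ae {Ω : Type*} [MeasurableSpace Ω] {μ : Measure Ω}
    [IsProbabilityMeasure μ] {s t : Set Ω} (h : ∀ᵐ ω ∂μ, ω ∉ s → ω ∈ t) :
    1 - μ.real s ≤ μ.real t := by
  have hst : s ∪ t ∈ ae μ := h.mono fun _ hω => or_iff_not_imp_left.2 hω
  have hone : μ.real (s ∪ t) = 1 :=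
    (measureReal_congr (Filter.eventuallyEq_univ.2 hst)).trans probReal_univ
  linarith [measureReal_union_le (μ := μ) s t]

theorem measureReal_exists_le {κ Ω : Type*} [Fintype κ] [MeasurableSpace Ω] {μ : Measure Ω}
    [IsFiniteMeasure μ] {p : κ → Ω → Prop} {c : ℝ} (h : ∀ k, μ.real {ω | p k ω} ≤ c) :
    μ.real {ω | ∃ k, p k ω} ≤ Fintype.card κ * c := by
  rw [Set.ofPred_exists]
  calc μ.real (⋃ k, {ω | p k ω}) ≤ ∑ k, μ.real {ω | p k ω} := measureReal_iUnion_fintype_le _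
    _ ≤ ∑ _k : κ, c := sum_le_sum fun k _ => h k
    _ = Fintype.card κ * c := by rw [sum_const, nsmul_eq_mul, card_univ]

variable {κ ι : Type*} [Fintype κ] [Fintype ι] (D : Measure ℝ) [IsProbabilityMeasure D]

theorem measureReal_exists_exists_prefRank_lt_le (L : ℕ) (c : ℝ) :
    (Measure.pi fun _ : κ => Measure.pi fun _ : ι => D).real
        {u | ∃ k a, prefRank (u k) a < L ∧ u k a < c} ≤
      Fintype.card κ * (L * D.real (Set.Iio c) ^ (Fintype.card ι / L)) := by
  refine measureReal_exists_le fun k => le_of_eq_of_le ?_ (measureReal_exists_prefRank_lt_le D L c)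
  classical
  have hrow : {u : κ → ι → ℝ | ∃ a, prefRank (u k) a < L ∧ u k a < c} =
      (({k} : Finset κ) : Set κ).pi fun _ => {x | ∃ a, prefRank x a < L ∧ x a < c} := by
    ext u
    simp
  rw [hrow, measureReal_pi_finset_pi, card_singleton, pow_one]

theorem measureReal_exists_le_card_filter_prefRank_lt_le (L b : ℕ) (c : ℝ) :
    (Measure.pi fun _ : κ => Measure.pi fun _ : ι => D).real {u | ∃ i j, i ≠ j ∧
        Function.Injective (u j) ∧ b ≤ #{a | prefRank (u j) a < L ∧ c < u i a}} ≤
      Fintype.card κ * (Fintype.card κ * (2 ^ L * D.real (Set.Ioi c) ^ b)) := by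
  refine measureReal_exists_le fun i => measureReal_exists_le fun j => ?_
  obtain rfl | hij := eq_or_ne i j
  · simp only [ne_eq, not_true_eq_false, false_and, Set.ofPred_false, measureReal_empty]
    positivity
  · simpa only [ne_eq, hij, not_false_eq_true, true_and] using
      measureReal_le_card_filter_prefRank_lt_le D hij L b c

end FailureProbability

section EnvyFree

variable {n m : ℕ} {w : Fin n → ℝ}

/-- The event that every run of the weighted picking sequence algorithm, whatever the
tie-breaking, ends in a weighted envy-free allocation. -/
def envyFreeEvent (m : ℕ) (w : Fin n → ℝ) : Set (Fin n → Fin m → ℝ) :=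
  {u | ∀ picker : Fin m → Fin n, ∀ item : Fin m → Fin m,
    IsWPSRun w u picker item → IsWEF w u (runBundle picker item)}

/-- The union of the three failure events: some agent is blocked from her top `L` items, some
agent has a top-`L` item worth less than `1 - δ / 2`, or some agent has `b` items worth more than
`1 - δ` among the top `L` items of another agent. -/
def failureEvent (n m Q L b : ℕ) (δ : ℝ) : Set (Fin n → Fin m → ℝ) :=
  {u | ∃ j, u ∈ blockedEvent (Fin m) Q L j} ∪
    {u | ∃ k g, prefRank (u k) g < L ∧ u k g < 1 - δ / 2} ∪
    {u | ∃ i j, i ≠ j ∧ Function.Injective (u j) ∧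
      b ≤ #{g | prefRank (u j) g < L ∧ 1 - δ < u i g}}

theorem measureReal_failureEvent_le {α β : ℝ} {D : Measure ℝ} [IsProbabilityMeasure D]
    (hD : LinearUpperTail α β D) {Q L b : ℕ} {δ : ℝ} (hδ : δ ∈ Set.Icc 0 1) (hQ : 0 < Q)
    (hL : 4 * Q ≤ L) (hρ : 5 * Real.exp 1 ^ 3 * (Q * n / m) ≤ 1 / 64) :
    (Measure.pi fun _ : Fin n => Measure.pi fun _ : Fin m => D).real (failureEvent n m Q L b δ) ≤
      n * (2 * (1 / 8) ^ L) + n * (L * (1 - α * (δ / 2)) ^ (m / L)) +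
        n * (n * (2 ^ L * (β * δ) ^ b)) := by
  have hhalf : δ / 2 ∈ Set.Icc (0 : ℝ) 1 := ⟨by linarith [hδ.1], by linarith [hδ.1, hδ.2]⟩
  refine (measureReal_union_le _ _).trans (add_le_add ((measureReal_union_le _ _).trans
    (add_le_add ?_ ?_)) ?_)
  · refine (measureReal_exists_le fun j =>
      measureReal_blockedEvent_le D j hQ hL ?_).trans_eq (by rw [Fintype.card_fin])
    rwa [Fintype.card_fin, Fintype.card_fin]
  · refine (measureReal_exists_exists_prefRank_lt_le D L (1 - δ / 2)).trans ?_
    rw [Fintype.card_fin, Fintype.card_fin]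
    gcongr
    exact hD.measureReal_Iio_le _ hhalf
  · refine (measureReal_exists_le_card_filter_prefRank_lt_le D L b (1 - δ)).trans ?_
    rw [Fintype.card_fin]
    gcongr
    exact hD.measureReal_Ioi_le _ hδ

theorem mem_envyFreeEvent_of_notMem_failureEvent (hw : ∀ k, 0 < w k) {C : ℝ}
    (hC : ∀ k l, w k ≤ C * w l) {u : Fin n → Fin m → ℝ} (hu : ∀ k g, u k g ∈ Set.Icc 0 1)
    (hinj : ∀ k, Function.Injective (u k)) {R b Q L : ℕ} {δ : ℝ} (hδ : δ ∈ Set.Icc 0 1)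
    (hRb : 1 ≤ ((R : ℝ) - b) * (δ / 2)) (hR : 0 < R) (hQ : C * (R - 1) < Q) (hm : n * Q < m)
    (hfail : u ∉ failureEvent n m Q L b δ) : u ∈ envyFreeEvent m w := by
  simp only [failureEvent, Set.mem_union, Set.mem_ofPred_eq] at hfail
  push Not at hfail
  obtain ⟨⟨hblocked, htop⟩, hfew⟩ := hfail
  refine fun picker item h => h.isWEF hw hC hu hδ hRb hR hQ hm (fun t hcount => ?_) htop
    fun i j hij => hfew i j hij (hinj j)
  by_contra! hrank
  obtain ⟨j, hj⟩ := h.exists_mem_blockedEvent hinj hcount hrank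
  exact hblocked j hj

theorem one_sub_measureReal_failureEvent_le {α β : ℝ} {D : Measure ℝ} [IsProbabilityMeasure D]
    (hD : LinearUpperTail α β D) (hw : ∀ k, 0 < w k) {C : ℝ} (hC : ∀ k l, w k ≤ C * w l)
    {R b Q : ℕ} {δ : ℝ} (hδ : δ ∈ Set.Icc 0 1) (hRb : 1 ≤ ((R : ℝ) - b) * (δ / 2)) (hR : 0 < R)
    (hQ : C * (R - 1) < Q) (hm : n * Q < m) (L : ℕ) :
    1 - (Measure.pi fun _ : Fin n => Measure.pi fun _ : Fin m => D).real
        (failureEvent n m Q L b δ) ≤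
      (Measure.pi fun _ : Fin n => Measure.pi fun _ : Fin m => D).real (envyFreeEvent m w) := by
  have := hD.nullSingletonClass
  refine one_sub_measureReal_le_of_ae ?_
  filter_upwards [ae_pi_forall (ae_pi_forall hD.ae_mem_Icc), ae_pi_forall (ae_pi_injective D)]
    with u hu hinj
  exact mem_envyFreeEvent_of_notMem_failureEvent hw hC hu hinj hδ hRb hR hQ hm

end EnvyFree

section Asymptotics

theorem pow_le_inv_pow_of_mul_log_le {x q c : ℝ} {k M : ℕ} (hx : 0 < x) (hq0 : 0 ≤ q)
    (hq : q ≤ Real.exp (-c)) (hM : k * Real.log x ≤ c * M) : q ^ M ≤ (x ^ k)⁻¹ :=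
  calc q ^ M ≤ Real.exp (-c) ^ M := pow_le_pow_left₀ hq0 hq M
    _ = Real.exp (-(c * M)) := by rw [← Real.exp_nat_mul, mul_neg, mul_comm]
    _ ≤ Real.exp (-(k * Real.log x)) := Real.exp_le_exp.2 (neg_le_neg hM)
    _ = (x ^ k)⁻¹ := by rw [Real.exp_neg, Real.exp_nat_mul, Real.exp_log hx]

theorem mul_two_mul_one_div_eight_pow_le {x : ℝ} {L : ℕ} (hx : 0 < x) (hL : Real.log x ≤ L) :
    x * (2 * (1 / 8) ^ L) ≤ 2 / x := by
  have hexp : (1 / 8 : ℝ) ≤ Real.exp (-2) := by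
    rw [Real.exp_neg, one_div, show (2 : ℝ) = 1 + 1 by norm_num, Real.exp_add]
    gcongr
    nlinarith [Real.exp_one_lt_d9, Real.exp_pos 1]
  have hpow : (1 / 8 : ℝ) ^ L ≤ (x ^ 2)⁻¹ :=
    pow_le_inv_pow_of_mul_log_le hx (by norm_num) hexp (by push_cast; linarith)
  calc x * (2 * (1 / 8) ^ L) ≤ x * (2 * (x ^ 2)⁻¹) := by gcongr
    _ = 2 / x := by field_simp

theorem mul_mul_one_sub_pow_le {x y q : ℝ} {M : ℕ} (hx : 0 < x) (hyx : y ≤ x) (hq : q ≤ 1)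
    (hM : 3 * Real.log x ≤ q * M) : x * (y * (1 - q) ^ M) ≤ 1 / x := by
  have hq0 : 0 ≤ 1 - q := sub_nonneg.2 hq
  have hpow : (1 - q) ^ M ≤ (x ^ 3)⁻¹ :=
    pow_le_inv_pow_of_mul_log_le hx hq0 (Real.one_sub_le_exp_neg q) (by exact_mod_cast hM)
  calc x * (y * (1 - q) ^ M) ≤ x * (x * (x ^ 3)⁻¹) := by gcongr
    _ = 1 / x := by field_simp

theorem mul_mul_two_pow_mul_pow_le {x q c : ℝ} {L b : ℕ} (hx : 0 < x) (hL : L ≤ Real.log x + 1)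
    (hq0 : 0 ≤ q) (hq : q ≤ Real.exp (-c)) (hb : 4 * Real.log x ≤ c * b) :
    x * (x * (2 ^ L * q ^ b)) ≤ 3 / x := by
  have htwo : (2 : ℝ) ^ L ≤ 3 * x :=
    calc (2 : ℝ) ^ L ≤ Real.exp 1 ^ L := by
          gcongr
          linarith [Real.exp_one_gt_d9]
      _ = Real.exp L := by rw [← Real.exp_nat_mul, mul_one]
      _ ≤ Real.exp (Real.log x + 1) := Real.exp_le_exp.2 hL
      _ = Real.exp 1 * x := by rw [Real.exp_add, Real.exp_log hx, mul_comm]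
      _ ≤ 3 * x := by
          gcongr
          linarith [Real.exp_one_lt_d9]
  have hpow : q ^ b ≤ (x ^ 4)⁻¹ := pow_le_inv_pow_of_mul_log_le hx hq0 hq (by exact_mod_cast hb)
  calc x * (x * (2 ^ L * q ^ b)) ≤ x * (x * (3 * x * (x ^ 4)⁻¹)) := by gcongr
    _ = 3 / x := by field_simp

theorem mul_two_div_le_exp_neg {β lam b : ℝ} (hlam : 0 < lam) (hβ : 2 * β ≤ lam)
    (hb : 8 * (Real.exp lam / lam) ≤ b) : β * (2 / b) ≤ Real.exp (-(lam / 2)) := by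
  have hb0 : 0 < b := lt_of_lt_of_le (by positivity) hb
  have hquadratic : lam ≤ 8 * (Real.exp (lam / 2) / lam) := by
    have := Real.pow_div_factorial_le_exp (lam / 2) (by positivity) 2
    norm_num [Nat.factorial] at this
    rw [← mul_div_assoc, le_div_iff₀ hlam]
    linarith
  rw [← mul_div_assoc, div_le_iff₀ hb0]
  calc β * 2 ≤ 8 * (Real.exp (lam / 2) / lam) := by linarith
    _ = Real.exp (-(lam / 2)) * (8 * (Real.exp lam / lam)) := by
        rw [show lam / 2 = -(lam / 2) + lam by ring, Real.exp_add]
        ring_nf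
    _ ≤ Real.exp (-(lam / 2)) * b := by gcongr

theorem three_mul_le_div_mul {α ℓ lam b x : ℝ} {m L : ℕ} (hα : 0 < α) (hlam : 0 < lam)
    (hαlam : 288 / α ≤ lam) (hlamℓ : lam ≤ ℓ) (hb0 : 0 < b) (hb : b ≤ 16 * (ℓ / lam))
    (hL0 : 0 < L) (hL : L ≤ 2 * ℓ) (hℓx : ℓ ≤ x) (hcube : ℓ ^ 3 / 6 ≤ x)
    (hm : 4 * (x * (ℓ / lam)) ≤ m) : 3 * ℓ ≤ α / b * ((m / L : ℕ) : ℝ) := by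
  have hℓ : 0 < ℓ := hlam.trans_le hlamℓ
  have hx : 0 < x := hℓ.trans_le hℓx
  have hL0' : (0 : ℝ) < L := Nat.cast_pos.2 hL0
  have hquot : x / lam ≤ ((m / L : ℕ) : ℝ) := by
    have hone : 1 ≤ x / lam := (one_le_div hlam).2 (hlamℓ.trans hℓx)
    have hmL : 2 * (x / lam) ≤ m / L := by
      rw [le_div_iff₀ hL0']
      calc 2 * (x / lam) * L ≤ 2 * (x / lam) * (2 * ℓ) := by gcongr
        _ = 4 * (x * (ℓ / lam)) := by ring
        _ ≤ m := hm
    have hfloor : (m : ℝ) / L < (m / L : ℕ) + 1 := by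
      rw [div_lt_iff₀ hL0']
      exact_mod_cast Nat.lt_mul_of_div_lt (Nat.lt_succ_self _) hL0
    linarith
  have hαx : 48 * ℓ ^ 2 ≤ α * x := by
    have hαℓ : 288 ≤ ℓ * α := (div_le_iff₀ hα).1 (hαlam.trans hlamℓ)
    calc 48 * ℓ ^ 2 = 288 * (ℓ ^ 2 / 6) := by ring
      _ ≤ ℓ * α * (ℓ ^ 2 / 6) := by gcongr
      _ = α * (ℓ ^ 3 / 6) := by ring
      _ ≤ α * x := by gcongr
  calc 3 * ℓ ≤ α * x / (16 * ℓ) := by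
        rw [le_div_iff₀ (by positivity)]
        linarith
    _ = α / (16 * (ℓ / lam)) * (x / lam) := by field_simp
    _ ≤ α / b * ((m / L : ℕ) : ℝ) := by gcongr

theorem exists_parameters {C ℓ lam : ℝ} (hC : 1 ≤ C) (hClam : 128 * C ≤ lam) (hlamℓ : lam ≤ ℓ) :
    ∃ b Q L : ℕ, 8 * (ℓ / lam) ≤ b ∧ b ≤ 16 * (ℓ / lam) ∧ C * ((2 * b : ℕ) - 1) < Q ∧
      Q ≤ 32 * C * (ℓ / lam) ∧ 0 < Q ∧ 4 * Q ≤ L ∧ ℓ ≤ L ∧ L ≤ ℓ + 1 := by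
  have hlam : 0 < lam := by linarith
  have hratio : 1 ≤ ℓ / lam := (one_le_div hlam).2 hlamℓ
  have hCratio : 128 * C * (ℓ / lam) ≤ ℓ := by
    rw [← mul_div_assoc, div_le_iff₀ hlam, mul_comm ℓ]
    gcongr
    exact hlam.le.trans hlamℓ
  set b := ⌈8 * (ℓ / lam)⌉₊
  have hb_ge : 8 * (ℓ / lam) ≤ b := Nat.le_ceil _
  have hb_le : b ≤ 16 * (ℓ / lam) := by
    linarith [Nat.ceil_lt_add_one (show 0 ≤ 8 * (ℓ / lam) by linarith)]
  set Q := ⌊C * (2 * b : ℕ)⌋₊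
  have hQ_le : Q ≤ 32 * C * (ℓ / lam) :=
    calc (Q : ℝ) ≤ C * (2 * b : ℕ) := Nat.floor_le (by positivity)
      _ ≤ C * (2 * (16 * (ℓ / lam))) := by
          push_cast
          gcongr
      _ = 32 * C * (ℓ / lam) := by ring
  have hQ_gt : C * ((2 * b : ℕ) - 1) < Q := by
    linarith [Nat.lt_floor_add_one (C * (2 * b : ℕ))]
  have hQ_pos : 0 < Q := by
    refine Nat.floor_pos.2 (one_le_mul_of_one_le_of_one_le hC ?_)
    push_cast
    linarith
  have hL : ℓ ≤ ⌈ℓ⌉₊ := Nat.le_ceil ℓ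
  refine ⟨b, Q, ⌈ℓ⌉₊, hb_ge, hb_le, hQ_gt, hQ_le, hQ_pos, ?_, hL,
    (Nat.ceil_lt_add_one (by linarith)).le⟩
  exact_mod_cast (show (4 : ℝ) * Q ≤ ⌈ℓ⌉₊ by linarith)

theorem five_mul_exp_one_pow_three_mul_le {x : ℝ} (hx : x ≤ 32 / 10 ^ 6) :
    5 * Real.exp 1 ^ 3 * x ≤ 1 / 64 :=
  calc 5 * Real.exp 1 ^ 3 * x ≤ 5 * Real.exp 1 ^ 3 * (32 / 10 ^ 6) := by gcongr
    _ ≤ 5 * (2.72 : ℝ) ^ 3 * (32 / 10 ^ 6) := by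
        gcongr
        linarith [Real.exp_one_lt_d9]
    _ ≤ 1 / 64 := by norm_num

theorem failure_bound_le {α β x : ℝ} {m b L : ℕ} (hα : 0 < α) (hα1 : α ≤ 1) (hβ : 0 ≤ β)
    (hx : 1 < x) (hαlam : 288 / α ≤ Real.log (Real.log x)) (hβlam : 2 * β ≤ Real.log (Real.log x))
    (hb : 8 * (Real.log x / Real.log (Real.log x)) ≤ b)
    (hb' : b ≤ 16 * (Real.log x / Real.log (Real.log x)))
    (hL : Real.log x ≤ L) (hL' : L ≤ Real.log x + 1)
    (hm : 4 * (x * (Real.log x / Real.log (Real.log x))) ≤ m) :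
    x * (2 * (1 / 8) ^ L) + x * (L * (1 - α * (2 / b / 2)) ^ (m / L)) +
      x * (x * (2 ^ L * (β * (2 / b)) ^ b)) ≤ 6 / x := by
  have hx0 : 0 < x := one_pos.trans hx
  have hℓ : 0 < Real.log x := Real.log_pos hx
  have hcube : Real.log x ^ 3 / 6 ≤ x := by
    simpa [Real.exp_log hx0, Nat.factorial] using Real.pow_div_factorial_le_exp _ hℓ.le 3
  have hexp : Real.exp (Real.log (Real.log x)) = Real.log x := Real.exp_log hℓ
  set ℓ := Real.log x
  set lam := Real.log ℓ
  have hlam : 288 ≤ lam := (le_div_self (by norm_num) hα hα1).trans hαlam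
  have hlamℓ : lam ≤ ℓ := (Real.log_le_sub_one_of_pos hℓ).trans (sub_le_self _ zero_le_one)
  have hratio : 1 ≤ ℓ / lam := (one_le_div (by linarith)).2 hlamℓ
  have hb1 : (1 : ℝ) ≤ b := by linarith
  have hsquare : 12 ≤ ℓ ^ 2 := by nlinarith
  have hℓx : 2 * ℓ ≤ x := by linarith [mul_le_mul_of_nonneg_left hsquare hℓ.le]
  have hrank : x * (2 * (1 / 8) ^ L) ≤ 2 / x := mul_two_mul_one_div_eight_pow_le hx0 hL
  have hlow : x * (L * (1 - α * (2 / b / 2)) ^ (m / L)) ≤ 1 / x := by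
    rw [show α * (2 / b / 2) = α / b by ring]
    exact mul_mul_one_sub_pow_le hx0 (by linarith) ((div_le_one (by linarith)).2 (hα1.trans hb1))
      (three_mul_le_div_mul hα (by linarith) hαlam hlamℓ (by linarith) hb'
        (Nat.cast_pos.1 (hℓ.trans_le hL)) (by linarith) (by linarith) hcube hm)
  have hhigh : x * (x * (2 ^ L * (β * (2 / b)) ^ b)) ≤ 3 / x := by
    refine mul_mul_two_pow_mul_pow_le hx0 hL' (by positivity)
      (mul_two_div_le_exp_neg (by linarith) hβlam (hexp ▸ hb)) ?_
    calc 4 * ℓ = lam / 2 * (8 * (ℓ / lam)) := by field_simp; norm_num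
      _ ≤ lam / 2 * b := by gcongr
  linarith [show 6 / x = 2 / x + 1 / x + 3 / x by ring]

theorem one_sub_six_div_le_measureReal_envyFreeEvent {α β C : ℝ} (hα : 0 < α) {D : Measure ℝ}
    [IsProbabilityMeasure D] (hD : LinearUpperTail α β D) {n m : ℕ}
    (hαlam : 288 / α ≤ Real.log (Real.log n)) (hβlam : 2 * β ≤ Real.log (Real.log n))
    (hClam : 128 * C ≤ Real.log (Real.log n)) (hC : 1 ≤ C)
    (hm : 10 ^ 6 * C * n * Real.log n / Real.log (Real.log n) ≤ m) {w : Fin n → ℝ}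
    (hw : ∀ k, 0 < w k) (hwC : ∀ k l, w k ≤ C * w l) :
    1 - 6 / n ≤ (Measure.pi fun _ : Fin n => Measure.pi fun _ : Fin m => D).real
      (envyFreeEvent m w) := by
  have hlam : 0 < Real.log (Real.log n) := by linarith
  have hℓ : 1 < Real.log n := (Real.log_pos_iff (Real.log_natCast_nonneg n)).1 hlam
  have hn : 1 < (n : ℝ) := (Real.log_pos_iff n.cast_nonneg).1 (by linarith)
  have hlamℓ := (Real.log_le_sub_one_of_pos (one_pos.trans hℓ)).trans (sub_le_self _ zero_le_one)
  obtain ⟨b, Q, L, hb, hb', hCQ, hQ, hQ0, hQL, hL, hL'⟩ := exists_parameters hC hClam hlamℓ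
  set r := Real.log n / Real.log (Real.log n) with hr
  have hr1 : 1 ≤ r := (one_le_div hlam).2 hlamℓ
  have hm' : 10 ^ 6 * (C * (n * r)) ≤ m := le_of_eq_of_le (by rw [hr]; ring) hm
  have hnr : n * r ≤ C * (n * r) := le_mul_of_one_le_left (by positivity) hC
  have hnr0 : 0 < n * r := by positivity
  have hnQ : n * Q ≤ 32 * (C * (n * r)) :=
    calc (n : ℝ) * Q ≤ n * (32 * C * r) := by gcongr
      _ = 32 * (C * (n * r)) := by ring
  have hb0 : (0 : ℝ) < b := by linarith
  have hδ : (2 / b : ℝ) ∈ Set.Icc 0 1 := ⟨by positivity, (div_le_one hb0).2 (by linarith)⟩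
  have hfail := measureReal_failureEvent_le (n := n) (m := m) (b := b) hD hδ hQ0 hQL
    (five_mul_exp_one_pow_three_mul_le ((div_le_iff₀ (by linarith)).2 (by linarith)))
  have hbound := failure_bound_le (m := m) hα hD.lower_le_one hD.upper_nonneg hn hαlam hβlam hb
    hb' hL hL' (by linarith)
  have hcompl := one_sub_measureReal_failureEvent_le hD hw hwC (R := 2 * b) hδ
    (by push_cast; field_simp; linarith) (mul_pos two_pos (Nat.cast_pos.1 hb0)) hCQ
    (by exact_mod_cast (show (n : ℝ) * Q < m by linarith)) L
  linarith

end Asymptotics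

theorem wps_WEF_whp_general (α β C : ℝ) (hα : 0 < α) :
    ∃ N : ℕ, ∀ D : Measure ℝ, IsProbabilityMeasure D → LinearUpperTail α β D →
      ∀ n : ℕ, N ≤ n → ∀ m : ℕ,
      10 ^ 6 * C * n * Real.log n / Real.log (Real.log n) ≤ (m : ℝ) →
      ∀ w : Fin n → ℝ, (∀ i, 0 < w i) → (∀ i j, w i ≤ C * w j) →
      ENNReal.ofReal (1 - 6 / n) ≤
        utilMeasure n m D
          {u | ∀ picker : Fin m → Fin n, ∀ item : Fin m → Fin m,
            IsWPSRun w u picker item → IsWEF w u (runBundle picker item)} := by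
  have hlim : Filter.Tendsto (fun n : ℕ => Real.log (Real.log n)) Filter.atTop Filter.atTop :=
    Real.tendsto_log_atTop.comp (Real.tendsto_log_atTop.comp tendsto_natCast_atTop_atTop)
  obtain ⟨N, hN⟩ := Filter.eventually_atTop.1
    ((Filter.eventually_gt_atTop 0).and ((hlim.eventually_ge_atTop (288 / α)).and
      ((hlim.eventually_ge_atTop (2 * β)).and (hlim.eventually_ge_atTop (128 * C)))))
  refine ⟨N, fun D _ hD n hn m hm w hw hwC => ?_⟩
  obtain ⟨hn0, hαlam, hβlam, hClam⟩ := hN n hn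
  have hC : 1 ≤ C := (le_mul_iff_one_le_left (hw ⟨0, hn0⟩)).1 (hwC _ _)
  exact ENNReal.ofReal_le_of_le_toReal
    (one_sub_six_div_le_measureReal_envyFreeEvent hα hD hαlam hβlam hClam hC hm hw hwC)

/-- Let `α, β > 0` and `C ≥ 1` be constants.  There is a constant `K` (depending only on
`α`, `β`, `C`) such that for every `(α,β)`-PDF-bounded distribution `D`, all sufficiently
large `n`, every `m ≥ 10^6·(β/α)·C·n·log n / log log n`, and every weight vector with
ratio at most `C`, when the `n·m` utilities are drawn independently from `D`, the
weighted picking sequence algorithm produces a WEF allocation with probability at least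
`1 - K/n`. -/
theorem wps_WEF_whp (α β C : ℝ) (hα : 0 < α) (hβ : 0 < β) (hC : 1 ≤ C) :
    ∃ K : ℝ, 0 < K ∧ ∃ N : ℕ,
      ∀ D : Measure ℝ, IsProbabilityMeasure D → PDFBounded α β D →
      ∀ n : ℕ, N ≤ n → ∀ m : ℕ,
      10 ^ 6 * (β / α) * C * n * Real.log n / Real.log (Real.log n) ≤ (m : ℝ) →
      ∀ w : Fin n → ℝ, (∀ i, 0 < w i) → (∀ i j, w i ≤ C * w j) →
      ENNReal.ofReal (1 - K / n) ≤
        utilMeasure n m D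
          {u | ∀ picker : Fin m → Fin n, ∀ item : Fin m → Fin m,
            IsWPSRun w u picker item → IsWEF w u (runBundle picker item)} := by
  obtain ⟨N, hN⟩ := wps_WEF_whp_general α β C hα
  refine ⟨6, by norm_num, N, fun D _ hD n hn m hm =>
    hN D ‹_› (hD.linearUpperTail hα.le hβ.le) n hn m ?_⟩
  have hβα : 1 ≤ β / α := (one_le_div hα).2 (hD.le hβ.le)
  set x := 10 ^ 6 * C * n * Real.log n / Real.log (Real.log n) with hx
  have hxm : β / α * x ≤ m := le_of_eq_of_le (by rw [hx]; ring) hm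
  obtain hx0 | hx0 := le_total x 0
  · exact hx0.trans m.cast_nonneg
  · exact (le_mul_of_one_le_left hx0 hβα).trans hxm
end

section
/- Let D be a PDF-bounded distribution on [0,1] with mean mu in (0,1), and let C >= 1 and epsilon in (0,1) be constants. For any sequence of instances with n agents, weight vectors (w_1,...,w_n) satisfying w_max/w_min <= C, and m >= (1+epsilon) * n/(1-mu) items, when the mn utilities are drawn independently from D, the probability that a weighted proportional (WPROP) allocation exists tends to 1 as n tends to infinity. -/
open Finset MeasureTheory
open scoped ENNReal

/-!
Fix a small `δ > 0` and say that an agent likes an item of value at least `1 - δ`. With high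
probability every total utility is at most `(μ + δ) m`, and then an agent of weight share `λ` is
content with `⌈λ (μ + δ) / (1 - δ) m⌉` liked items. These demands add up to at most
`(μ + δ) / (1 - δ) m + n`, which is below `(1 - η) m` for some `η > 0` because
`n ≤ (1 - μ) / (1 + ε) m`. So it suffices to check Hall's condition for the graph of agents and
liked items. By Hoeffding's inequality every agent likes a fixed positive fraction of the items,
whereas each single demand is `O(m / n)`; this settles all sets of fewer than `s` agents, for any
constant `s`. If `s` is large, an item is disliked by `s` given agents with so small a probability
that a union bound over the sets of `s` agents and the sets of `η m` items shows that any `s` agents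
together like all but `η m` items; this settles the larger sets.
-/

open Filter Function Topology

section Hall

variable {ι α : Type*} [DecidableEq α] {t : ι → Finset α} {k : ι → ℕ}

theorem exists_disjoint_subsets_card_eq_of_hall
    (hall : ∀ S : Finset ι, ∑ i ∈ S, k i ≤ #(S.biUnion t)) :
    ∃ B : ι → Finset α, Pairwise (Disjoint on B) ∧ ∀ i, B i ⊆ t i ∧ #(B i) = k i := by
  classical
  have hall_copies (X : Finset (Σ i, Fin (k i))) : #X ≤ #(X.biUnion fun x ↦ t x.1) :=
    calc
      #X ≤ #((X.image Sigma.fst).sigma fun i ↦ (univ : Finset (Fin (k i)))) :=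
        card_le_card fun x hx ↦ by simpa using ⟨x.2, hx⟩
      _ = ∑ i ∈ X.image Sigma.fst, k i := by simp
      _ ≤ #((X.image Sigma.fst).biUnion t) := hall _
      _ = #(X.biUnion fun x ↦ t x.1) := by rw [image_biUnion]
  obtain ⟨f, f_inj, f_mem⟩ :=
    (all_card_le_biUnion_card_iff_exists_injective _).1 hall_copies
  refine ⟨fun i ↦ univ.image fun j ↦ f ⟨i, j⟩, fun i i' hne ↦ ?_, fun i ↦ ⟨?_, ?_⟩⟩
  · simp only [onFun, disjoint_left, mem_image, mem_univ, true_and]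
    rintro _ ⟨j, rfl⟩ ⟨j', h⟩
    exact hne (congrArg Sigma.fst (f_inj h)).symm
  · exact image_subset_iff.2 fun j _ ↦ f_mem ⟨i, j⟩
  · exact (card_image_of_injective _ (f_inj.comp sigma_mk_injective)).trans (card_fin _)

theorem sum_le_card_biUnion_of_expansion [Fintype ι] {s : ℕ} (hdeg : ∀ i, s * k i ≤ #(t i))
    (hexp : ∀ S : Finset ι, #S = s → ∑ i, k i ≤ #(S.biUnion t)) (S : Finset ι) :
    ∑ i ∈ S, k i ≤ #(S.biUnion t) := by
  rcases le_total s #S with hS | hS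
  · obtain ⟨S', hS', hcard⟩ := exists_subset_card_eq hS
    calc
      ∑ i ∈ S, k i ≤ ∑ i, k i := sum_le_sum_of_subset (subset_univ S)
      _ ≤ #(S'.biUnion t) := hexp S' hcard
      _ ≤ #(S.biUnion t) := card_le_card (biUnion_subset_biUnion_of_subset_left t hS')
  · rcases S.eq_empty_or_nonempty with rfl | hne
    · simp
    obtain ⟨i, hi, hmax⟩ := S.exists_max_image k hne
    calc
      ∑ i ∈ S, k i ≤ #S * k i := sum_le_card_nsmul S k (k i) hmax
      _ ≤ s * k i := Nat.mul_le_mul_right _ hS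
      _ ≤ #(t i) := hdeg i
      _ ≤ #(S.biUnion t) := card_le_card (subset_biUnion_of_mem t hi)

end Hall

section Quota

variable {ι : Type*} [Fintype ι] {w : ι → ℝ} {x : ℝ}

/-- The number of items demanded by agent `i` when `x` items are to be shared in proportion to
the weights: the proportional share of `i`, rounded up. -/
noncomputable def quota (w : ι → ℝ) (x : ℝ) (i : ι) : ℕ :=
  ⌈w i / (∑ j, w j) * x⌉₊

theorem le_quota (w : ι → ℝ) (x : ℝ) (i : ι) : w i / (∑ j, w j) * x ≤ quota w x i :=
  Nat.le_ceil _

theorem quota_le_add_one (hw : ∀ i, 0 ≤ w i) (hx : 0 ≤ x) (i : ι) :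
    (quota w x i : ℝ) ≤ w i / (∑ j, w j) * x + 1 :=
  (Nat.ceil_lt_add_one
    (mul_nonneg (div_nonneg (hw i) (sum_nonneg fun j _ ↦ hw j)) hx)).le

theorem sum_quota_le (hw : ∀ i, 0 ≤ w i) (hx : 0 ≤ x) :
    ∑ i, (quota w x i : ℝ) ≤ x + Fintype.card ι :=
  calc
    ∑ i, (quota w x i : ℝ) ≤ ∑ i, (w i / (∑ j, w j) * x + 1) :=
      sum_le_sum fun i _ ↦ quota_le_add_one hw hx i
    _ = (∑ i, w i) / (∑ i, w i) * x + Fintype.card ι := by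
      rw [sum_add_distrib, ← sum_mul, ← sum_div, sum_const, card_univ, nsmul_one]
    _ ≤ x + Fintype.card ι := by
      gcongr
      exact mul_le_of_le_one_left hx (div_self_le_one _)

theorem mul_quota_le {C d s y : ℝ} (hw : ∀ i, 0 ≤ w i) (hW : 0 < ∑ i, w i) {i : ι}
    (hshare : Fintype.card ι * w i ≤ C * ∑ j, w j) (hs : 0 ≤ s)
    (hsd : s * (C + 1) ≤ d * Fintype.card ι) (hx : 0 ≤ x) (hxy : x ≤ y)
    (hy : Fintype.card ι ≤ y) :
    s * quota w x i ≤ d * y := by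
  have hcard : (0 : ℝ) < Fintype.card ι := Nat.cast_pos.2 (Fintype.card_pos_iff.2 ⟨i⟩)
  have hC : 0 ≤ C :=
    nonneg_of_mul_nonneg_left ((mul_nonneg hcard.le (hw i)).trans hshare) hW
  refine le_of_mul_le_mul_left ?_ hcard
  calc
    Fintype.card ι * (s * quota w x i)
      ≤ Fintype.card ι * (s * (w i / (∑ j, w j) * x + 1)) := by
        gcongr
        exact quota_le_add_one hw hx i
    _ = s * (Fintype.card ι * w i / (∑ j, w j) * x + Fintype.card ι) := by ring
    _ ≤ s * (C * y + y) := by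
      gcongr
      exact (div_le_iff₀ hW).2 hshare
    _ = s * (C + 1) * y := by ring
    _ ≤ d * Fintype.card ι * y := by
      gcongr
      exact hx.trans hxy
    _ = Fintype.card ι * (d * y) := by ring

end Quota

section Deterministic

variable {n m s : ℕ} {w : Fin n → ℝ} {u : Fin n → Fin m → ℝ} {a c d η : ℝ}

/-- The items that agent `i` values at least `c`: the neighbours of `i` in the bipartite graph of
agents and items to which Hall's theorem is applied. -/
noncomputable def likedItems (c : ℝ) (u : Fin n → Fin m → ℝ) (i : Fin n) : Finset (Fin m) :=
  {g | c ≤ u i g}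

theorem mem_likedItems {i : Fin n} {g : Fin m} : g ∈ likedItems c u i ↔ c ≤ u i g := by
  simp [likedItems]

theorem one_sub_mul_le_card_biUnion_likedItems {S : Finset (Fin n)}
    (h : ∀ T : Finset (Fin m), (∀ i ∈ S, ∀ g ∈ T, u i g ∈ Set.Iio c) → #T < η * m) :
    (1 - η) * m ≤ #(S.biUnion (likedItems c u)) := by
  have hcompl : #(S.biUnion (likedItems c u))ᶜ < η * m := by
    refine h _ fun i hi g hg ↦ ?_
    simp only [mem_compl, mem_biUnion, mem_likedItems, not_exists, not_and, not_le] at hg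
    exact hg i hi
  have hcard : (#(S.biUnion (likedItems c u)) + #(S.biUnion (likedItems c u))ᶜ : ℝ) = m := by
    exact_mod_cast (card_add_card_compl _).trans (Fintype.card_fin m)
  linarith

theorem exists_isAllocation_of_pairwise_disjoint (hn : 0 < n) {B : Fin n → Finset (Fin m)}
    (hB : Pairwise (Disjoint on B)) :
    ∃ A : Fin n → Finset (Fin m), IsAllocation A ∧ ∀ i, B i ⊆ A i := by
  have exists_owner (g : Fin m) : ∃ i, ∀ j, g ∈ B j → i = j := by
    by_cases hg : ∃ i, g ∈ B i
    · obtain ⟨i, hi⟩ := hg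
      exact ⟨i, fun j hj ↦ hB.eq (not_disjoint_iff.2 ⟨g, hi, hj⟩)⟩
    · exact ⟨⟨0, hn⟩, fun j hj ↦ (hg ⟨j, hj⟩).elim⟩
  choose owner howner using exists_owner
  exact ⟨fun i ↦ {g | owner g = i}, fun g ↦ ⟨owner g, by simp, by simp⟩,
    fun i g hg ↦ by simpa using howner g i hg⟩

theorem exists_isWPROP_of_hall (hn : 0 < n) (hu : ∀ i g, 0 ≤ u i g) {k : Fin n → ℕ}
    (hall : ∀ S : Finset (Fin n), ∑ i ∈ S, k i ≤ #(S.biUnion (likedItems c u)))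
    (hk : ∀ i, w i / (∑ j, w j) * (∑ g, u i g) ≤ k i * c) :
    ∃ A : Fin n → Finset (Fin m), IsAllocation A ∧ IsWPROP w u A := by
  obtain ⟨B, hdisj, hB⟩ := exists_disjoint_subsets_card_eq_of_hall hall
  obtain ⟨A, hA, hBA⟩ := exists_isAllocation_of_pairwise_disjoint hn hdisj
  refine ⟨A, hA, fun i ↦ ?_⟩
  obtain ⟨hliked, hcard⟩ := hB i
  calc
    w i / (∑ j, w j) * (∑ g, u i g) ≤ k i * c := hk i
    _ = #(B i) • c := by rw [hcard, nsmul_eq_mul]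
    _ ≤ ∑ g ∈ B i, u i g := card_nsmul_le_sum _ _ _ fun g hg ↦ mem_likedItems.1 (hliked hg)
    _ ≤ ∑ g ∈ A i, u i g := sum_le_sum_of_subset_of_nonneg (hBA i) fun g _ _ ↦ hu i g

/-- The properties of random utilities from which a WPROP allocation is constructed: nonnegativity,
total utilities not much above their mean, every agent liking a positive fraction `d` of the items,
and every `s` agents together liking all but a fraction `η` of them. An item is liked if its value
is at least `c`. -/
structure IsTypical (a c d η : ℝ) (s : ℕ) (u : Fin n → Fin m → ℝ) : Prop where
  nonneg : ∀ i g, 0 ≤ u i g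
  sum_le : ∀ i, ∑ g, u i g ≤ a * m
  degree : ∀ i, d * m ≤ #(likedItems c u i)
  expansion : ∀ S : Finset (Fin n), #S = s → (1 - η) * m ≤ #(S.biUnion (likedItems c u))

theorem IsTypical.exists_isWPROP (hu : IsTypical a c d η s u) (hw : ∀ i, 0 ≤ w i)
    (hW : 0 < ∑ i, w i) {C : ℝ} (hshare : ∀ i, n * w i ≤ C * ∑ j, w j)
    (ha : 0 ≤ a) (hc : 0 < c) (hη : 0 ≤ η)
    (hroom : a / c * m + n ≤ (1 - η) * m) (hs : s * (C + 1) ≤ d * n) :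
    ∃ A : Fin n → Finset (Fin m), IsAllocation A ∧ IsWPROP w u A := by
  have hn : 0 < n := by
    rcases n.eq_zero_or_pos with rfl | hn
    · simp at hW
    · exact hn
  have hηm : 0 ≤ η * m := by positivity
  have hx : 0 ≤ a / c * m := by positivity
  have hxm : a / c * m ≤ m := by linarith [n.cast_nonneg (α := ℝ)]
  have hnm : (n : ℝ) ≤ m := by linarith
  refine exists_isWPROP_of_hall (c := c) (k := quota w (a / c * m)) hn hu.nonneg
    (sum_le_card_biUnion_of_expansion (s := s) (fun i ↦ ?_) fun S hS ↦ ?_) fun i ↦ ?_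
  · have hdeg : (s * quota w (a / c * m) i : ℝ) ≤ #(likedItems c u i) :=
      (mul_quota_le hw hW (by simpa using hshare i) s.cast_nonneg (by simpa using hs) hx hxm
        (by simpa using hnm)).trans (hu.degree i)
    exact_mod_cast hdeg
  · have hexp : ∑ i, (quota w (a / c * m) i : ℝ) ≤ #(S.biUnion (likedItems c u)) :=
      calc
        ∑ i, (quota w (a / c * m) i : ℝ) ≤ a / c * m + n := by
          simpa using sum_quota_le hw hx
        _ ≤ (1 - η) * m := hroom
        _ ≤ #(S.biUnion (likedItems c u)) := hu.expansion S hS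
    exact_mod_cast hexp
  · have hshare_nonneg : 0 ≤ w i / ∑ j, w j := div_nonneg (hw i) hW.le
    calc
      w i / (∑ j, w j) * ∑ g, u i g ≤ w i / (∑ j, w j) * (a * m) := by
        gcongr
        exact hu.sum_le i
      _ = w i / (∑ j, w j) * (a / c * m) * c := by field_simp
      _ ≤ quota w (a / c * m) i * c := by
        gcongr
        exact le_quota w _ i

end Deterministic

section WithHighProbability

variable {Ω : ℕ → Type*} [∀ n, MeasurableSpace (Ω n)] {P : ∀ n, Measure (Ω n)}
  {p q : ∀ n, Ω n → Prop}

/-- The property `p` holds with high probability under the sequence of laws `P`. Bounding the outer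
measure of the failure event, instead of the measure of the event, spares measurability of `p`. -/
def WithHighProbability (P : ∀ n, Measure (Ω n)) (p : ∀ n, Ω n → Prop) : Prop :=
  Tendsto (fun n ↦ P n {x | ¬ p n x}) atTop (𝓝 0)

namespace WithHighProbability

theorem of_ae (h : ∀ n, ∀ᵐ x ∂P n, p n x) : WithHighProbability P p :=
  tendsto_const_nhds.congr fun n ↦ (ae_iff.1 (h n)).symm

theorem mono (hp : WithHighProbability P p) (hpq : ∀ᶠ n in atTop, ∀ x, p n x → q n x) :
    WithHighProbability P q :=
  tendsto_of_tendsto_of_tendsto_of_le_of_le' tendsto_const_nhds hp (.of_forall fun _ ↦ zero_le)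
    (hpq.mono fun _ h ↦ measure_mono fun x ↦ mt (h x))

theorem and (hp : WithHighProbability P p) (hq : WithHighProbability P q) :
    WithHighProbability P fun n x ↦ p n x ∧ q n x := by
  refine tendsto_of_tendsto_of_tendsto_of_le_of_le tendsto_const_nhds
    (by simpa using Tendsto.add hp hq) (fun _ ↦ zero_le) fun n ↦ ?_
  exact (measure_mono fun x hx ↦ not_and_or.1 hx).trans (measure_union_le _ _)

theorem tendsto_one [∀ n, IsProbabilityMeasure (P n)] (hp : WithHighProbability P p) :
    Tendsto (fun n ↦ P n {x | p n x}) atTop (𝓝 1) := by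
  have hlower : Tendsto (fun n ↦ 1 - P n {x | ¬ p n x}) atTop (𝓝 1) := by
    simpa using ENNReal.Tendsto.sub tendsto_const_nhds hp (Or.inl ENNReal.one_ne_top)
  refine tendsto_of_tendsto_of_tendsto_of_le_of_le hlower tendsto_const_nhds (fun n ↦ ?_)
    fun _ ↦ prob_le_one
  rw [tsub_le_iff_right, ← measure_univ (μ := P n), ← Set.union_compl_self {x | p n x}]
  exact measure_union_le _ _

end WithHighProbability

end WithHighProbability

section ProductMeasure

variable {ι Ω : Type*} [Fintype ι] [MeasurableSpace Ω] {μ : Measure Ω}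

theorem pi_forall_of_ae [SigmaFinite μ] {p : Ω → Prop} (hp : ∀ᵐ x ∂μ, p x) :
    ∀ᵐ v ∂Measure.pi fun _ : ι ↦ μ, ∀ i, p (v i) :=
  ae_all_iff.2 fun _ ↦ Measure.tendsto_eval_ae_ae.eventually hp

variable [IsProbabilityMeasure μ]

theorem pi_exists_mem_le (B : Set Ω) :
    Measure.pi (fun _ : ι ↦ μ) {v | ∃ i, v i ∈ B} ≤ Fintype.card ι * μ B :=
  calc
    Measure.pi (fun _ : ι ↦ μ) {v | ∃ i, v i ∈ B}
      = Measure.pi (fun _ : ι ↦ μ) (⋃ i, eval i ⁻¹' B) := by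
        congr 1 with v
        simp
    _ ≤ ∑ i, Measure.pi (fun _ : ι ↦ μ) (eval i ⁻¹' B) := measure_iUnion_fintype_le _ _
    _ ≤ ∑ _ : ι, μ B := by
      gcongr with i
      have heval := measurePreserving_eval (fun _ : ι ↦ μ) i
      exact (Measure.le_map_apply heval.aemeasurable B).trans_eq (by rw [heval.map_eq])
    _ = Fintype.card ι * μ B := by simp

theorem pi_forall_mem_finset (T : Finset ι) (B : Set Ω) :
    Measure.pi (fun _ : ι ↦ μ) {v | ∀ i ∈ T, v i ∈ B} = μ B ^ #T :=
  (Measure.pi_pi_finset (fun _ ↦ μ) (fun _ ↦ B) T).trans (prod_const _)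

theorem measureReal_pi_card_mul_le_sum_le {f : Ω → ℝ} (hf : AEMeasurable f μ) {b₀ b₁ : ℝ}
    (hfb : ∀ᵐ x ∂μ, f x ∈ Set.Icc b₀ b₁) {a : ℝ} (ha : ∫ x, f x ∂μ ≤ a) :
    (Measure.pi fun _ : ι ↦ μ).real {v | Fintype.card ι * a ≤ ∑ i, f (v i)} ≤
      Real.exp (-(2 * (a - ∫ x, f x ∂μ) ^ 2 / (b₁ - b₀) ^ 2)) ^ Fintype.card ι := by
  have hindep : ProbabilityTheory.iIndepFun
      (fun (i : ι) (v : ι → Ω) ↦ f (v i) - ∫ x, f x ∂μ) (Measure.pi fun _ ↦ μ) :=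
    ProbabilityTheory.iIndepFun_pi (X := fun _ x ↦ f x - ∫ x, f x ∂μ)
      fun _ ↦ hf.sub_const _
  have hsubG (i : ι) : ProbabilityTheory.HasSubgaussianMGF
      (fun v : ι → Ω ↦ f (v i) - ∫ x, f x ∂μ) ((‖b₁ - b₀‖₊ / 2) ^ 2)
      (Measure.pi fun _ ↦ μ) := by
    have heval := measurePreserving_eval (fun _ : ι ↦ μ) i
    rw [← integral_comp_eval (μ := fun _ : ι ↦ μ) (i := i) hf.aestronglyMeasurable]
    exact ProbabilityTheory.hasSubgaussianMGF_of_mem_Icc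
      (hf.comp_quasiMeasurePreserving heval.quasiMeasurePreserving)
      (heval.quasiMeasurePreserving.ae hfb)
  have hoeffding := ProbabilityTheory.HasSubgaussianMGF.measure_sum_ge_le_of_iIndepFun hindep
    (s := univ) (fun i _ ↦ hsubG i) (ε := Fintype.card ι * (a - ∫ x, f x ∂μ))
    (mul_nonneg (Nat.cast_nonneg _) (sub_nonneg.2 ha))
  have hevent : {v : ι → Ω | Fintype.card ι * a ≤ ∑ i, f (v i)} =
      {v | Fintype.card ι * (a - ∫ x, f x ∂μ) ≤ ∑ i, (f (v i) - ∫ x, f x ∂μ)} := by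
    ext v
    simp [mul_sub]
  rw [hevent]
  refine hoeffding.trans_eq ?_
  rw [← Real.exp_nat_mul]
  congr 1
  rcases isEmpty_or_nonempty ι with hι | hι
  · simp
  · simp only [sum_const, card_univ, nsmul_eq_mul, NNReal.coe_mul, NNReal.coe_natCast,
      NNReal.coe_pow, NNReal.coe_div, coe_nnnorm, Real.norm_eq_abs, NNReal.coe_ofNat, div_pow,
      sq_abs]
    field_simp

end ProductMeasure

section RandomUtilities

variable {D : Measure ℝ} [IsProbabilityMeasure D] {m : ℕ → ℕ}

instance isProbabilityMeasure_utilMeasure (n m : ℕ) : IsProbabilityMeasure (utilMeasure n m D) :=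
  inferInstanceAs (IsProbabilityMeasure (Measure.pi _))

theorem tendsto_natCast_pow_mul_pow_zero {x : ℝ≥0∞} (hx : x < 1) (k : ℕ) :
    Tendsto (fun n : ℕ ↦ (n : ℝ≥0∞) ^ k * x ^ n) atTop (𝓝 0) := by
  lift x to NNReal using hx.ne_top
  have hreal : Tendsto (fun n : ℕ ↦ (n : ℝ) ^ k * (x : ℝ) ^ n) atTop (𝓝 0) :=
    tendsto_pow_const_mul_const_pow_of_lt_one k x.coe_nonneg (by exact_mod_cast hx)
  have hnnreal : Tendsto (fun n : ℕ ↦ (n : NNReal) ^ k * x ^ n) atTop (𝓝 0) :=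
    NNReal.tendsto_coe.1 (by push_cast; exact hreal)
  simpa only [ENNReal.coe_mul, ENNReal.coe_pow, ENNReal.coe_natCast, ENNReal.coe_zero] using
    ENNReal.tendsto_coe.2 hnnreal

theorem utilMeasure_block_eq {n m : ℕ} (S : Finset (Fin n)) (T : Finset (Fin m)) (B : Set ℝ) :
    utilMeasure n m D {u | ∀ i ∈ S, ∀ g ∈ T, u i g ∈ B} = (D B ^ #T) ^ #S := by
  rw [← pi_forall_mem_finset T B]
  exact pi_forall_mem_finset S {v : Fin m → ℝ | ∀ g ∈ T, v g ∈ B}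

-- The base `4⁻¹` leaves room for a union bound over the at most `2 ^ m` sets `T`.
theorem utilMeasure_exists_block_le {n m s N : ℕ} {B : Set ℝ} (hB : D B ^ s ≤ 4⁻¹ ^ N) :
    utilMeasure n m D {u | ∃ S : Finset (Fin n), #S = s ∧ ∃ T : Finset (Fin m),
      m ≤ N * #T ∧ ∀ i ∈ S, ∀ g ∈ T, u i g ∈ B} ≤ n ^ s * 2⁻¹ ^ m := by
  have hblock (S : Finset (Fin n)) (hS : #S = s) (T : Finset (Fin m)) (hT : m ≤ N * #T) :
      utilMeasure n m D {u | ∀ i ∈ S, ∀ g ∈ T, u i g ∈ B} ≤ 4⁻¹ ^ m :=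
    calc
      utilMeasure n m D {u | ∀ i ∈ S, ∀ g ∈ T, u i g ∈ B} = (D B ^ s) ^ #T := by
        rw [utilMeasure_block_eq, hS, pow_right_comm]
      _ ≤ (4⁻¹ ^ N) ^ #T := by gcongr
      _ = 4⁻¹ ^ (N * #T) := (pow_mul _ _ _).symm
      _ ≤ 4⁻¹ ^ m := pow_le_pow_right_of_le_one' (by simp) hT
  calc
    utilMeasure n m D {u | ∃ S : Finset (Fin n), #S = s ∧ ∃ T : Finset (Fin m),
        m ≤ N * #T ∧ ∀ i ∈ S, ∀ g ∈ T, u i g ∈ B}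
      ≤ utilMeasure n m D (⋃ S ∈ powersetCard s (univ : Finset (Fin n)),
          ⋃ T ∈ ({T | m ≤ N * #T} : Finset (Finset (Fin m))),
            {u | ∀ i ∈ S, ∀ g ∈ T, u i g ∈ B}) := by
        refine measure_mono ?_
        rintro u ⟨S, hS, T, hT, hu⟩
        simp only [Set.mem_iUnion, mem_powersetCard_univ, mem_filter_univ]
        exact ⟨S, hS, T, hT, hu⟩
    _ ≤ ∑ S ∈ powersetCard s (univ : Finset (Fin n)),
          ∑ T ∈ ({T | m ≤ N * #T} : Finset (Finset (Fin m))), 4⁻¹ ^ m := by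
      refine (measure_biUnion_finset_le _ _).trans (sum_le_sum fun S hS ↦ ?_)
      refine (measure_biUnion_finset_le _ _).trans (sum_le_sum fun T hT ↦ ?_)
      exact hblock S (mem_powersetCard_univ.1 hS) T ((mem_filter_univ T).1 hT)
    _ = n.choose s * (#{T : Finset (Fin m) | m ≤ N * #T} * 4⁻¹ ^ m) := by
      simp only [sum_const, nsmul_eq_mul, card_powersetCard, card_fin]
    _ ≤ n ^ s * (2 ^ m * 4⁻¹ ^ m) := by
      gcongr
      · exact_mod_cast Nat.choose_le_pow n s
      · exact_mod_cast (card_le_univ _).trans_eq (by simp)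
    _ = n ^ s * 2⁻¹ ^ m := by
      rw [← mul_pow, show (4 : ℝ≥0∞) = 2 * 2 by norm_num, ENNReal.mul_inv (by simp) (by simp),
        ENNReal.mul_inv_cancel_left (by simp) (by simp)]

theorem exists_withHighProbability_expansion (hm : ∀ n, n ≤ m n) {B : Set ℝ} (hB : D B < 1)
    {η : ℝ} (hη : 0 < η) :
    ∃ s, WithHighProbability (fun n ↦ utilMeasure n (m n) D) fun n u ↦
      ∀ S : Finset (Fin n), #S = s →
        ∀ T : Finset (Fin (m n)), (∀ i ∈ S, ∀ g ∈ T, u i g ∈ B) → #T < η * m n := by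
  obtain ⟨N, hN⟩ := exists_nat_ge η⁻¹
  obtain ⟨s, hs⟩ : ∃ s : ℕ, D B ^ s ≤ 4⁻¹ ^ N :=
    ((ENNReal.tendsto_pow_atTop_nhds_zero_of_lt_one hB).eventually
      (ge_mem_nhds (ENNReal.pow_pos (by simp) N))).exists
  refine ⟨s, tendsto_of_tendsto_of_tendsto_of_le_of_le tendsto_const_nhds
    (tendsto_natCast_pow_mul_pow_zero (x := 2⁻¹) (by simp) s) (fun _ ↦ zero_le) fun n ↦ ?_⟩
  calc
    _ ≤ utilMeasure n (m n) D {u | ∃ S : Finset (Fin n), #S = s ∧ ∃ T : Finset (Fin (m n)),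
        m n ≤ N * #T ∧ ∀ i ∈ S, ∀ g ∈ T, u i g ∈ B} := by
      refine measure_mono fun u hu ↦ ?_
      simp only [Set.mem_ofPred_eq, not_forall, not_lt] at hu
      obtain ⟨S, hS, T, hST, hT⟩ := hu
      have hmN : (m n : ℝ) ≤ N * #T :=
        calc
          (m n : ℝ) = η⁻¹ * (η * m n) := by field_simp
          _ ≤ N * #T := by gcongr
      exact ⟨S, hS, T, by exact_mod_cast hmN, hST⟩
    _ ≤ n ^ s * 2⁻¹ ^ m n := utilMeasure_exists_block_le hs
    _ ≤ n ^ s * 2⁻¹ ^ n := by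
      gcongr _ * ?_
      exact pow_le_pow_right_of_le_one' (by simp) (hm n)

theorem withHighProbability_sum_lt (hm : ∀ n, n ≤ m n) {f : ℝ → ℝ} (hf : AEMeasurable f D)
    {b₀ b₁ : ℝ} (hb : b₀ < b₁) (hfb : ∀ᵐ x ∂D, f x ∈ Set.Icc b₀ b₁) {a : ℝ}
    (ha : ∫ x, f x ∂D < a) :
    WithHighProbability (fun n ↦ utilMeasure n (m n) D) fun n u ↦
      ∀ i, ∑ g, f (u i g) < a * m n := by
  set ρ := Real.exp (-(2 * (a - ∫ x, f x ∂D) ^ 2 / (b₁ - b₀) ^ 2)) with hρ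
  have hρ_lt : ρ < 1 := by
    have := sub_pos.2 ha
    have := sub_pos.2 hb
    exact Real.exp_lt_one_iff.2 (neg_lt_zero.2 (by positivity))
  refine tendsto_of_tendsto_of_tendsto_of_le_of_le tendsto_const_nhds
    (tendsto_natCast_pow_mul_pow_zero (x := ENNReal.ofReal ρ) (by simpa using hρ_lt) 1)
    (fun _ ↦ zero_le) fun n ↦ ?_
  have hoeffding := measureReal_pi_card_mul_le_sum_le (ι := Fin (m n)) hf hfb ha.le
  rw [Fintype.card_fin, ← hρ] at hoeffding
  set B : Set (Fin (m n) → ℝ) := {v | m n * a ≤ ∑ g, f (v g)}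
  calc
    _ ≤ utilMeasure n (m n) D {u | ∃ i, u i ∈ B} := by
      refine measure_mono fun u hu ↦ ?_
      simpa [B, mul_comm] using hu
    _ ≤ n * Measure.pi (fun _ ↦ D) B :=
      (pi_exists_mem_le B).trans_eq (by rw [Fintype.card_fin])
    _ ≤ n * ENNReal.ofReal ρ ^ m n := by
      gcongr
      rw [← ENNReal.ofReal_pow (Real.exp_pos _).le, ← ofReal_measureReal]
      exact ENNReal.ofReal_le_ofReal hoeffding
    _ ≤ n ^ 1 * ENNReal.ofReal ρ ^ n := by
      rw [pow_one]
      gcongr _ * ?_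
      exact pow_le_pow_right_of_le_one' (by simpa using hρ_lt.le) (hm n)

theorem withHighProbability_le_card_likedItems (hm : ∀ n, n ≤ m n) {c d : ℝ}
    (hd : d < D.real (Set.Ici c)) :
    WithHighProbability (fun n ↦ utilMeasure n (m n) D) fun n u ↦
      ∀ i, d * m n ≤ #(likedItems c u i) := by
  -- Counting liked items with weight `-1` turns the lower tail into an upper tail.
  set f : ℝ → ℝ := (Set.Ici c).indicator fun _ ↦ -1 with hf
  have hfb (x : ℝ) : f x ∈ Set.Icc (-1) 0 := by
    by_cases hx : x ∈ Set.Ici c <;> simp [hf, hx]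
  have hfint : ∫ x, f x ∂D < -d := by
    rw [hf, integral_indicator_const _ measurableSet_Ici]
    simpa using hd
  refine (withHighProbability_sum_lt hm
    (measurable_const.indicator measurableSet_Ici).aemeasurable (by norm_num)
    (ae_of_all D hfb) hfint).mono (.of_forall fun n u hu i ↦ ?_)
  have hcount : ∑ g, f (u i g) = -#(likedItems c u i) := by
    simp [hf, Set.indicator_apply, likedItems, ← sum_filter]
  linarith [hu i]

theorem exists_withHighProbability_isTypical (hD : ∀ᵐ x ∂D, x ∈ Set.Icc (0 : ℝ) 1)
    (hm : ∀ n, n ≤ m n) {a c d η : ℝ} (ha : ∫ x, x ∂D < a) (hd₀ : 0 ≤ d)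
    (hd : d < D.real (Set.Ici c)) (hη : 0 < η) :
    ∃ s, WithHighProbability (fun n ↦ utilMeasure n (m n) D) fun _ u ↦
      IsTypical a c d η s u := by
  have hlt_one : D (Set.Iio c) < 1 := by
    have hpos : 0 < D (Set.Ici c) := (ENNReal.toReal_pos_iff.1 (hd₀.trans_lt hd)).1
    rw [← Set.compl_Ici, prob_compl_eq_one_sub measurableSet_Ici]
    exact ENNReal.sub_lt_self (by simp) (by simp) hpos.ne'
  obtain ⟨s, hexp⟩ := exists_withHighProbability_expansion hm hlt_one hη
  have hnonneg : WithHighProbability (fun n ↦ utilMeasure n (m n) D) fun _ u ↦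
      ∀ i g, 0 ≤ u i g :=
    .of_ae fun n ↦ pi_forall_of_ae (pi_forall_of_ae (hD.mono fun _ hx ↦ hx.1))
  have hsum := withHighProbability_sum_lt hm aemeasurable_id zero_lt_one hD ha
  have hdeg := withHighProbability_le_card_likedItems hm hd
  refine ⟨s, (((hnonneg.and hsum).and hdeg).and hexp).mono (.of_forall fun n u hu ↦ ?_)⟩
  obtain ⟨⟨⟨hnonneg, hsum⟩, hdeg⟩, hexp⟩ := hu
  exact ⟨hnonneg, fun i ↦ (hsum i).le, hdeg,
    fun S hS ↦ one_sub_mul_le_card_biUnion_likedItems (hexp S hS)⟩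

end RandomUtilities

theorem PDFBounded.support_eq_Icc {α β : ℝ} (hα : 0 < α) {D : Measure ℝ}
    (hD : PDFBounded α β D) : D.support = Set.Icc 0 1 := by
  obtain ⟨f, rfl, hf⟩ := hD
  set U : Measure ℝ := volume.restrict (Set.Icc 0 1)
  refine (Measure.support_subset_of_isClosed isClosed_Icc
    ((withDensity_absolutelyContinuous U f).ae_le (ae_restrict_mem measurableSet_Icc))).antisymm ?_
  have hle : ENNReal.ofReal α • U ≤ U.withDensity f := by
    rw [← withDensity_const]
    exact withDensity_mono ((ae_restrict_mem measurableSet_Icc).mono fun x hx ↦ (hf x hx).1)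
  have hac : U ≪ U.withDensity f :=
    (Measure.absolutelyContinuous_smul (ENNReal.ofReal_pos.2 hα).ne').trans
      hle.absolutelyContinuous
  have hinterior : interior (Set.Icc (0 : ℝ) 1) ⊆ (U.withDensity f).support := fun x hx ↦
    hac.support_mono (Measure.interior_inter_support ⟨hx, by simp [Measure.support_eq_univ]⟩)
  calc
    Set.Icc (0 : ℝ) 1 = closure (interior (Set.Icc 0 1)) := by
      rw [interior_Icc, closure_Ioo zero_ne_one]
    _ ⊆ (U.withDensity f).support := closure_minimal hinterior Measure.isClosed_support

theorem exists_add_div_one_sub_add_lt_one {mu ε : ℝ} (hmu : mu < 1) (hε : 0 < ε) :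
    ∃ δ ∈ Set.Ioo (0 : ℝ) 1, (mu + δ) / (1 - δ) + (1 - mu) / (1 + ε) < 1 := by
  have hcont : ContinuousAt (fun δ : ℝ ↦ (mu + δ) / (1 - δ) + (1 - mu) / (1 + ε)) 0 := by
    fun_prop (disch := norm_num)
  have hzero : (mu + 0) / (1 - 0) + (1 - mu) / (1 + ε) < 1 := by
    have : (1 - mu) / (1 + ε) < 1 - mu := div_lt_self (by linarith) (by linarith)
    simpa using by linarith
  have hnear := (hcont.eventually_lt_const hzero).filter_mono
    (nhdsWithin_le_nhds (s := Set.Ioi 0))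
  obtain ⟨δ, hlt, hδ⟩ := (hnear.and (Ioo_mem_nhdsGT zero_lt_one)).exists
  exact ⟨δ, hδ, hlt⟩

theorem wprop_existence_general (D : Measure ℝ) [IsProbabilityMeasure D]
    (hsupp : D.support ⊆ Set.Icc 0 1) (hone : 1 ∈ D.support)
    (mu : ℝ) (hmu1 : mu < 1) (hmean : ∫ x, x ∂D = mu) (C : ℝ) (ε : ℝ) (hε : 0 < ε)
    (m : ℕ → ℕ) (w : (n : ℕ) → Fin n → ℝ) (hw : ∀ n, ∀ i, 0 < w n i)
    (hshare : ∀ n, ∀ i : Fin n, n * w n i ≤ C * ∑ j, w n j)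
    (hm : ∀ n : ℕ, (1 + ε) * n / (1 - mu) ≤ (m n : ℝ)) :
    Tendsto
      (fun n ↦ utilMeasure n (m n) D
        {u | ∃ A : Fin n → Finset (Fin (m n)), IsAllocation A ∧ IsWPROP (w n) u A})
      atTop (𝓝 1) := by
  have hD : ∀ᵐ x ∂D, x ∈ Set.Icc (0 : ℝ) 1 := mem_of_superset Measure.support_mem_ae hsupp
  have hmu : 0 ≤ mu := hmean ▸ integral_nonneg_of_ae (hD.mono fun x hx ↦ hx.1)
  obtain ⟨δ, ⟨hδ₀, hδ₁⟩, hslack⟩ := exists_add_div_one_sub_add_lt_one hmu1 hε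
  have hroom (n : ℕ) : (n : ℝ) ≤ (1 - mu) / (1 + ε) * m n := by
    have := (div_le_iff₀ (sub_pos.2 hmu1)).1 (hm n)
    rw [div_mul_eq_mul_div, le_div_iff₀ (by linarith)]
    linarith
  have hnm (n : ℕ) : n ≤ m n := by
    have : (1 - mu) / (1 + ε) ≤ 1 := (div_le_one (by linarith)).2 (by linarith)
    exact_mod_cast (hroom n).trans (mul_le_of_le_one_left (m n).cast_nonneg this)
  have hliked : 0 < D.real (Set.Ici (1 - δ)) :=
    ENNReal.toReal_pos_iff.2 ⟨(Measure.mem_support_iff_forall 1).1 hone _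
      (Ici_mem_nhds (by linarith)), measure_lt_top _ _⟩
  obtain ⟨s, hs⟩ := exists_withHighProbability_isTypical hD hnm (a := mu + δ)
    (by linarith) (half_pos hliked).le (half_lt_self hliked) (sub_pos.2 hslack)
  refine (hs.mono ?_).tendsto_one
  obtain ⟨n₀, hn₀⟩ := exists_nat_ge (s * (C + 1) / (D.real (Set.Ici (1 - δ)) / 2))
  filter_upwards [eventually_ge_atTop n₀, eventually_gt_atTop 0] with n hn hn_pos u hu
  have : Nonempty (Fin n) := ⟨⟨0, hn_pos⟩⟩
  refine hu.exists_isWPROP (fun i ↦ (hw n i).le) (sum_pos (fun i _ ↦ hw n i) univ_nonempty)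
    (hshare n) (by linarith) (by linarith) (sub_pos.2 hslack).le ?_ ?_
  · linarith [hroom n]
  · have hn₀n : (n₀ : ℝ) ≤ n := by exact_mod_cast hn
    linarith [(div_le_iff₀ (half_pos hliked)).1 (hn₀.trans hn₀n)]

/-- Let `D` be a PDF-bounded distribution on `[0,1]` with mean `μ ∈ (0,1)`, and let
`C ≥ 1` and `ε ∈ (0,1)` be constants.  For any sequence of instances with `n` agents,
weight ratio at most `C`, and `m ≥ (1+ε)·n/(1-μ)` items, when the utilities are drawn
independently from `D`, the probability that a WPROP allocation exists tends to `1`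
as `n → ∞`. -/
theorem wprop_existence (D : Measure ℝ) [IsProbabilityMeasure D]
    (hD : ∃ α β : ℝ, 0 < α ∧ 0 < β ∧ PDFBounded α β D)
    (mu : ℝ) (hmu : 0 < mu) (hmu1 : mu < 1) (hmean : ∫ x, x ∂D = mu)
    (C : ℝ) (hC : 1 ≤ C) (ε : ℝ) (hε : 0 < ε) (hε1 : ε < 1)
    (m : ℕ → ℕ) (w : (n : ℕ) → Fin n → ℝ)
    (hw : ∀ n, ∀ i, 0 < w n i)
    (hratio : ∀ n, ∀ i j : Fin n, w n i ≤ C * w n j)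
    (hm : ∀ n : ℕ, (1 + ε) * n / (1 - mu) ≤ (m n : ℝ)) :
    Filter.Tendsto
      (fun n => utilMeasure n (m n) D
        {u | ∃ A : Fin n → Finset (Fin (m n)), IsAllocation A ∧ IsWPROP (w n) u A})
      Filter.atTop (nhds 1) := by
  obtain ⟨α, β, hα, -, hpdf⟩ := hD
  have hsupp := hpdf.support_eq_Icc hα
  exact wprop_existence_general D hsupp.le (hsupp ▸ Set.right_mem_Icc.2 zero_le_one) mu hmu1 hmean
    C ε hε m w hw
    (fun n i ↦ by simpa [mul_sum] using card_nsmul_le_sum univ _ _ fun j _ ↦ hratio n i j) hm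
end
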